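/- arXiv:1507.02547 — 9 statements merged into one kernel-verified Lean document; each statement's English description precedes it below -/
import Mathlib

section
/- Let n ≥ 1, let Ω ⊆ ℝⁿ be a nonempty open set, and let F : ℝⁿ → ℂ be continuous on the difference set Ω − Ω = {x − y : x, y ∈ Ω}. Then F is positive definite on Ω if and only if for every smooth compactly supported function φ : ℝⁿ → ℂ whose support is contained in Ω, the double integral ∫_Ω ∫_Ω conj(φ(x)) · φ(y) · F(x − y) dx dy has zero imaginary part and nonnegative real part. -/
open MeasureTheory Complex Pointwise

noncomputable section

/-- `F` is positive definite on `Ω`: all finite quadratic forms built from the kernel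
`(x, y) ↦ F (x - y)` with nodes in `Ω` are real and nonnegative. -/
def PosDefOn {n : ℕ} (Ω : Set (EuclideanSpace ℝ (Fin n)))
    (F : EuclideanSpace ℝ (Fin n) → ℂ) : Prop :=
  ∀ (N : ℕ) (x : Fin N → EuclideanSpace ℝ (Fin n)) (c : Fin N → ℂ),
    (∀ i, x i ∈ Ω) →
      (∑ i, ∑ j, (starRingEnd ℂ) (c i) * c j * F (x i - x j)).im = 0 ∧
      0 ≤ (∑ i, ∑ j, (starRingEnd ℂ) (c i) * c j * F (x i - x j)).re



/-- The closed cone of nonnegative reals in `ℂ`. -/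
def PCone : Set ℂ := {z | z.im = 0 ∧ 0 ≤ z.re}

theorem isClosed_PCone : IsClosed PCone :=
  (isClosed_eq Complex.continuous_im continuous_const).inter
    (isClosed_le continuous_const Complex.continuous_re)

/-- The weighted kernel. -/
def GK {n : ℕ} (F : (EuclideanSpace ℝ (Fin n)) → ℂ) (f g : (EuclideanSpace ℝ (Fin n)) → ℂ) (p : (EuclideanSpace ℝ (Fin n)) × (EuclideanSpace ℝ (Fin n))) : ℂ :=
  (starRingEnd ℂ) (f p.1) * g p.2 * F (p.1 - p.2)

theorem GK_zero {n : ℕ} (F f g : (EuclideanSpace ℝ (Fin n)) → ℂ) (p : (EuclideanSpace ℝ (Fin n)) × (EuclideanSpace ℝ (Fin n)))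
    (hp : p ∉ tsupport f ×ˢ tsupport g) : GK F f g p = 0 := by
  unfold GK
  by_cases h1 : p.1 ∈ tsupport f
  · have h2 : p.2 ∉ tsupport g := fun h => hp ⟨h1, h⟩
    simp [image_eq_zero_of_notMem_tsupport h2]
  · simp [image_eq_zero_of_notMem_tsupport h1]

theorem F_contAt {n : ℕ} {Ω : Set (EuclideanSpace ℝ (Fin n))} (hop : IsOpen Ω) {F : (EuclideanSpace ℝ (Fin n)) → ℂ}
    (hF : ContinuousOn F (Ω - Ω)) (p : (EuclideanSpace ℝ (Fin n)) × (EuclideanSpace ℝ (Fin n))) (h1 : p.1 ∈ Ω) (h2 : p.2 ∈ Ω) :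
    ContinuousAt (fun q : (EuclideanSpace ℝ (Fin n)) × (EuclideanSpace ℝ (Fin n)) => F (q.1 - q.2)) p := by
  have h : ContinuousAt F (p.1 - p.2) :=
    hF.continuousAt ((hop.sub_right).mem_nhds (Set.sub_mem_sub h1 h2))
  exact ContinuousAt.comp (f := fun q : (EuclideanSpace ℝ (Fin n)) × (EuclideanSpace ℝ (Fin n)) => q.1 - q.2) h (by fun_prop)

theorem GK_cont {n : ℕ} {Ω : Set (EuclideanSpace ℝ (Fin n))} (hop : IsOpen Ω) {F : (EuclideanSpace ℝ (Fin n)) → ℂ}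
    (hF : ContinuousOn F (Ω - Ω)) {f g : (EuclideanSpace ℝ (Fin n)) → ℂ} (hf : Continuous f) (hg : Continuous g)
    (hfs : tsupport f ⊆ Ω) (hgs : tsupport g ⊆ Ω) : Continuous (GK F f g) := by
  rw [continuous_iff_continuousAt]
  intro p
  by_cases hp : p ∈ tsupport f ×ˢ tsupport g
  · have := F_contAt hop hF p (hfs hp.1) (hgs hp.2)
    have h2 : ContinuousAt (fun q : (EuclideanSpace ℝ (Fin n)) × (EuclideanSpace ℝ (Fin n)) => (starRingEnd ℂ) (f q.1) * g q.2) p := by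
      apply Continuous.continuousAt
      have := Complex.continuous_conj
      fun_prop
    exact h2.mul this
  · have ho : IsOpen (tsupport f ×ˢ tsupport g)ᶜ :=
      ((isClosed_tsupport f).prod (isClosed_tsupport g)).isOpen_compl
    have : GK F f g =ᶠ[nhds p] fun _ => 0 := by
      filter_upwards [ho.mem_nhds hp] with q hq using GK_zero F f g q hq
    exact continuousAt_const.congr this.symm

theorem GK_cs {n : ℕ} (F : (EuclideanSpace ℝ (Fin n)) → ℂ) {f g : (EuclideanSpace ℝ (Fin n)) → ℂ} (hf : HasCompactSupport f)
    (hg : HasCompactSupport g) : HasCompactSupport (GK F f g) :=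
  HasCompactSupport.intro (hf.isCompact.prod hg.isCompact) (fun p hp => GK_zero F f g p hp)

theorem GK_int {n : ℕ} {Ω : Set (EuclideanSpace ℝ (Fin n))} (hop : IsOpen Ω) {F : (EuclideanSpace ℝ (Fin n)) → ℂ}
    (hF : ContinuousOn F (Ω - Ω)) {f g : (EuclideanSpace ℝ (Fin n)) → ℂ} (hf : Continuous f) (hg : Continuous g)
    (hfc : HasCompactSupport f) (hgc : HasCompactSupport g)
    (hfs : tsupport f ⊆ Ω) (hgs : tsupport g ⊆ Ω) :
    Integrable (GK F f g) (volume.prod volume) :=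
  (GK_cont hop hF hf hg hfs hgs).integrable_of_hasCompactSupport (GK_cs F hfc hgc)

/-- The iterated integral is the integral on the product. -/
theorem iter_eq {n : ℕ} {Ω : Set (EuclideanSpace ℝ (Fin n))} (hop : IsOpen Ω) {F : (EuclideanSpace ℝ (Fin n)) → ℂ}
    (hF : ContinuousOn F (Ω - Ω)) {f : (EuclideanSpace ℝ (Fin n)) → ℂ} (hf : Continuous f)
    (hfc : HasCompactSupport f) (hfs : tsupport f ⊆ Ω) :
    (∫ x in Ω, ∫ y in Ω, (starRingEnd ℂ) (f x) * f y * F (x - y)) =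
      ∫ p, GK F f f p ∂(volume.prod volume) := by
  rw [integral_prod _ (GK_int hop hF hf hf hfc hfc hfs hfs)]
  have hz : ∀ x, x ∉ Ω → f x = 0 := fun x hx =>
    image_eq_zero_of_notMem_tsupport (fun h => hx (hfs h))
  rw [setIntegral_eq_integral_of_forall_compl_eq_zero]
  · congr 1
    ext x
    rw [setIntegral_eq_integral_of_forall_compl_eq_zero]
    · rfl
    · intro y hy
      simp [hz y hy]
  · intro x hx
    simp [hz x hx]

theorem posDef_finset {n : ℕ} {Ω : Set (EuclideanSpace ℝ (Fin n))} {F : (EuclideanSpace ℝ (Fin n)) → ℂ} (h : PosDefOn Ω F)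
    (T : Finset (EuclideanSpace ℝ (Fin n))) (hT : ∀ x ∈ T, x ∈ Ω) (c : (EuclideanSpace ℝ (Fin n)) → ℂ) :
    (∑ a ∈ T, ∑ b ∈ T, (starRingEnd ℂ) (c a) * c b * F (a - b)) ∈ PCone := by
  have := h T.card (fun i => (T.equivFin.symm i : EuclideanSpace ℝ (Fin n))) (fun i => c (T.equivFin.symm i))
    (fun i => hT _ (T.equivFin.symm i).2)
  have e : (∑ a ∈ T, ∑ b ∈ T, (starRingEnd ℂ) (c a) * c b * F (a - b)) =
      ∑ i, ∑ j, (starRingEnd ℂ) (c (T.equivFin.symm i)) * c (T.equivFin.symm j) *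
        F ((T.equivFin.symm i : EuclideanSpace ℝ (Fin n)) - T.equivFin.symm j) := by
    rw [← Finset.sum_coe_sort, ← T.equivFin.symm.sum_comp]
    refine Finset.sum_congr rfl fun i _ => ?_
    rw [← Finset.sum_coe_sort, ← T.equivFin.symm.sum_comp]
  rw [e]
  exact this

theorem simple_mem {n : ℕ} {Ω : Set (EuclideanSpace ℝ (Fin n))} {F : (EuclideanSpace ℝ (Fin n)) → ℂ} (h : PosDefOn Ω F)
    (f : (EuclideanSpace ℝ (Fin n)) → ℂ) (μ : Measure (EuclideanSpace ℝ (Fin n))) [IsFiniteMeasure μ]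
    (s : SimpleFunc (EuclideanSpace ℝ (Fin n)) (EuclideanSpace ℝ (Fin n))) (hs : ∀ x, s x ∈ Ω)
    (hi : Integrable (fun p : (EuclideanSpace ℝ (Fin n)) × (EuclideanSpace ℝ (Fin n)) => GK F f f (s p.1, s p.2)) (μ.prod μ)) :
    (∫ p, GK F f f (s p.1, s p.2) ∂(μ.prod μ)) ∈ PCone := by
  rw [integral_prod _ hi]
  have key : ∀ H : (EuclideanSpace ℝ (Fin n)) → ℂ, ∫ x, H (s x) ∂μ =
      ∑ a ∈ s.range, (μ.real (s ⁻¹' {a})) • H a := by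
    intro H
    have h1 : Integrable (s : (EuclideanSpace ℝ (Fin n)) → (EuclideanSpace ℝ (Fin n))) μ := s.integrable_of_isFiniteMeasure
    have h2 : ∫ x, H (s x) ∂μ = ∫ x, (∑ a ∈ s.range, (s ⁻¹' {a}).indicator (fun _ => H a) x) ∂μ := by
      congr 1
      ext x
      rw [Finset.sum_eq_single (s x)]
      · simp
      · intro b _ hb
        simp [Set.indicator, hb.symm]
      · intro hx
        exact absurd (s.mem_range_self x) hx
    rw [h2, integral_finsetSum]
    · refine Finset.sum_congr rfl fun a _ => ?_
      rw [integral_indicator_const _ (s.measurableSet_fiber a)]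
    · intro a _
      exact (integrable_const _).indicator (s.measurableSet_fiber a)
  have e : (∫ x, ∫ y, GK F f f (s x, s y) ∂μ ∂μ) = ∑ a ∈ s.range, ∑ b ∈ s.range,
      (starRingEnd ℂ) ((μ.real (s ⁻¹' {a}) : ℂ) * f a) * ((μ.real (s ⁻¹' {b}) : ℂ) * f b)
        * F (a - b) := by
    rw [key (fun a => ∫ y, GK F f f (a, s y) ∂μ)]
    refine Finset.sum_congr rfl fun a _ => ?_
    rw [key (fun b => GK F f f (a, b)), Finset.smul_sum]
    refine Finset.sum_congr rfl fun b _ => ?_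
    simp only [GK, Complex.real_smul, map_mul, Complex.conj_ofReal]
    ring
  change (∫ x, ∫ y, GK F f f (s x, s y) ∂μ ∂μ) ∈ PCone
  rw [e]
  refine posDef_finset h s.range ?_ (fun a => (μ.real (s ⁻¹' {a}) : ℂ) * f a)
  intro x hx
  obtain ⟨y, rfl⟩ := SimpleFunc.mem_range.1 hx
  exact hs y

theorem forward {n : ℕ} {Ω : Set (EuclideanSpace ℝ (Fin n))} (hne : Ω.Nonempty) (hop : IsOpen Ω) {F : (EuclideanSpace ℝ (Fin n)) → ℂ}
    (hF : ContinuousOn F (Ω - Ω)) (h : PosDefOn Ω F) {f : (EuclideanSpace ℝ (Fin n)) → ℂ} (hf : Continuous f)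
    (hfc : HasCompactSupport f) (hfs : tsupport f ⊆ Ω) :
    (∫ p, GK F f f p ∂(volume.prod volume)) ∈ PCone := by
  obtain ⟨y0, hy0⟩ := hne
  have hc := GK_cont hop hF hf hf hfs hfs
  obtain ⟨C, hC⟩ := hc.bounded_above_of_compact_support (GK_cs F hfc hfc)
  set K := tsupport f with hK
  have hKc : IsCompact K := hfc.isCompact
  set μ : Measure (EuclideanSpace ℝ (Fin n)) := volume.restrict K with hμ
  have : IsFiniteMeasure μ := ⟨by rw [hμ, Measure.restrict_apply_univ]; exact hKc.measure_lt_top⟩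
  have e1 : (∫ p, GK F f f p ∂(volume.prod volume)) = ∫ p, GK F f f p ∂(μ.prod μ) := by
    rw [hμ, Measure.prod_restrict, setIntegral_eq_integral_of_forall_compl_eq_zero]
    intro p hp
    exact GK_zero F f f p hp
  rw [e1]
  let s : ℕ → SimpleFunc (EuclideanSpace ℝ (Fin n)) (EuclideanSpace ℝ (Fin n)) := fun k =>
    SimpleFunc.approxOn (fun x => x) measurable_id Ω y0 hy0 k
  have hsm : ∀ k, AEStronglyMeasurable
      (fun p : (EuclideanSpace ℝ (Fin n)) × (EuclideanSpace ℝ (Fin n)) => GK F f f (s k p.1, s k p.2)) (μ.prod μ) := by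
    intro k
    have : Measurable (fun p : (EuclideanSpace ℝ (Fin n)) × (EuclideanSpace ℝ (Fin n)) => (s k p.1, s k p.2)) :=
      ((s k).measurable.comp measurable_fst).prodMk ((s k).measurable.comp measurable_snd)
    exact (hc.measurable.comp this).aestronglyMeasurable
  have hmem : ∀ᵐ p ∂(μ.prod μ), p ∈ K ×ˢ K := by
    rw [hμ, Measure.prod_restrict]
    exact ae_restrict_mem (hKc.measurableSet.prod hKc.measurableSet)
  have lim : Filter.Tendsto (fun k => ∫ p, GK F f f (s k p.1, s k p.2) ∂(μ.prod μ)) Filter.atTop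
      (nhds (∫ p, GK F f f p ∂(μ.prod μ))) := by
    refine tendsto_integral_of_dominated_convergence (fun _ => C) hsm (integrable_const _)
      (fun k => Filter.Eventually.of_forall fun p => hC _) ?_
    filter_upwards [hmem] with p hp
    have t : ∀ x ∈ K, Filter.Tendsto (fun k => s k x) Filter.atTop (nhds x) := fun x hx =>
      SimpleFunc.tendsto_approxOn measurable_id hy0 (subset_closure (hfs hx))
    exact (hc.tendsto p).comp ((t p.1 hp.1).prodMk_nhds (t p.2 hp.2))
  refine isClosed_PCone.mem_of_tendsto lim (Filter.Eventually.of_forall fun k => ?_)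
  refine simple_mem h f μ (s k) (fun x => SimpleFunc.approxOn_mem measurable_id hy0 k x) ?_
  exact Integrable.of_bound (hsm k) C (Filter.Eventually.of_forall fun p => hC _)

/-- Bump of radius `1/(k+1)` about `c`. -/
def bmp {n : ℕ} (c : EuclideanSpace ℝ (Fin n)) (k : ℕ) : ContDiffBump c where
  rIn := 1 / ((k : ℝ) + 1) / 2
  rOut := 1 / ((k : ℝ) + 1)
  rIn_pos := by positivity
  rIn_lt_rOut := half_lt_self (by positivity)

/-- Complex-valued normalized bump. -/
def psi {n : ℕ} (c : EuclideanSpace ℝ (Fin n)) (k : ℕ) (x : EuclideanSpace ℝ (Fin n)) : ℂ := (((bmp c k).normed volume x : ℝ) : ℂ)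

theorem psi_contDiff {n : ℕ} (c : EuclideanSpace ℝ (Fin n)) (k : ℕ) : ContDiff ℝ (⊤ : ℕ∞) (psi c k) :=
  Complex.ofRealCLM.contDiff.comp (bmp c k).contDiff_normed

theorem psi_tsupport {n : ℕ} (c : EuclideanSpace ℝ (Fin n)) (k : ℕ) :
    tsupport (psi c k) ⊆ Metric.closedBall c (1 / ((k : ℝ) + 1)) := by
  have h := (bmp c k).tsupport_normed_eq (μ := volume)
  have h2 : Metric.closedBall c (1 / ((k : ℝ) + 1)) = tsupport ((bmp c k).normed volume) := h.symm
  rw [h2]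
  apply closure_mono
  intro x hx h0
  exact hx (by simp [psi, h0])

theorem psi_cs {n : ℕ} (c : EuclideanSpace ℝ (Fin n)) (k : ℕ) : HasCompactSupport (psi c k) :=
  (isCompact_closedBall c _).of_isClosed_subset (isClosed_tsupport _) (psi_tsupport c k)

theorem psi_lim {n : ℕ} {Ω : Set (EuclideanSpace ℝ (Fin n))} (hop : IsOpen Ω) {F : (EuclideanSpace ℝ (Fin n)) → ℂ}
    (hF : ContinuousOn F (Ω - Ω)) (a b : EuclideanSpace ℝ (Fin n)) (ha : a ∈ Ω) (hb : b ∈ Ω) 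
    (hA : ∀ᶠ k in Filter.atTop, tsupport (psi a k) ⊆ Ω)
    (hB : ∀ᶠ k in Filter.atTop, tsupport (psi b k) ⊆ Ω) :
    Filter.Tendsto (fun k => ∫ p, GK F (psi a k) (psi b k) p ∂(volume.prod volume))
      Filter.atTop (nhds (F (a - b))) := by
  rw [Metric.tendsto_nhds]
  intro ε hε
  have hc := F_contAt hop hF (a, b) ha hb
  rw [Metric.continuousAt_iff] at hc
  obtain ⟨δ, hδ, hd⟩ := hc (ε / 2) (by positivity)
  have hk : ∀ᶠ k : ℕ in Filter.atTop, 1 / ((k : ℝ) + 1) < δ :=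
    tendsto_one_div_add_atTop_nhds_zero_nat.eventually (gt_mem_nhds hδ)
  filter_upwards [hA, hB, hk] with k hAk hBk hkk
  have hi := GK_int hop hF (psi_contDiff a k).continuous (psi_contDiff b k).continuous
    (psi_cs a k) (psi_cs b k) hAk hBk
  let u := (bmp a k).normed (volume : Measure (EuclideanSpace ℝ (Fin n)))
  let v := (bmp b k).normed (volume : Measure (EuclideanSpace ℝ (Fin n)))
  have hu1 : ∫ x, u x = 1 := (bmp a k).integral_normed
  have hv1 : ∫ x, v x = 1 := (bmp b k).integral_normed
  have hui : Integrable u := (bmp a k).integrable_normed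
  have hvi : Integrable v := (bmp b k).integrable_normed
  have huv : Integrable (fun p : (EuclideanSpace ℝ (Fin n)) × (EuclideanSpace ℝ (Fin n)) => u p.1 * v p.2) (volume.prod volume) :=
    hui.mul_prod hvi
  have huv1 : ∫ p : (EuclideanSpace ℝ (Fin n)) × (EuclideanSpace ℝ (Fin n)), u p.1 * v p.2 ∂(volume.prod volume) = 1 := by
    rw [integral_prod_mul, hu1, hv1, one_mul]
  have hconst : ∫ p : (EuclideanSpace ℝ (Fin n)) × (EuclideanSpace ℝ (Fin n)), ((u p.1 * v p.2 : ℝ) : ℂ) * F (a - b)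
      ∂(volume.prod volume) = F (a - b) := by
    rw [integral_mul_const, integral_complex_ofReal, huv1]; simp
  have hci : Integrable (fun p : (EuclideanSpace ℝ (Fin n)) × (EuclideanSpace ℝ (Fin n)) => ((u p.1 * v p.2 : ℝ) : ℂ) * F (a - b))
      (volume.prod volume) := huv.ofReal.mul_const _
  rw [dist_eq_norm]
  nth_rewrite 1 [← hconst]
  rw [← integral_sub hi hci]
  have hle : ‖∫ p : (EuclideanSpace ℝ (Fin n)) × (EuclideanSpace ℝ (Fin n)), (GK F (psi a k) (psi b k) p -
      ((u p.1 * v p.2 : ℝ) : ℂ) * F (a - b)) ∂(volume.prod volume)‖ ≤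
      ∫ p : (EuclideanSpace ℝ (Fin n)) × (EuclideanSpace ℝ (Fin n)), (u p.1 * v p.2) * (ε / 2) ∂(volume.prod volume) := by
    refine norm_integral_le_of_norm_le (huv.mul_const _) (Filter.Eventually.of_forall fun p => ?_)
    have e : GK F (psi a k) (psi b k) p - ((u p.1 * v p.2 : ℝ) : ℂ) * F (a - b) =
        ((u p.1 * v p.2 : ℝ) : ℂ) * (F (p.1 - p.2) - F (a - b)) := by
      simp only [GK, psi, Complex.conj_ofReal, u, v, Complex.ofReal_mul]
      ring
    have hu0 : 0 ≤ u p.1 := (bmp a k).nonneg_normed _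
    have hv0 : 0 ≤ v p.2 := (bmp b k).nonneg_normed _
    rw [e, norm_mul, Complex.norm_real, Real.norm_of_nonneg (mul_nonneg hu0 hv0)]
    by_cases h0 : u p.1 * v p.2 = 0
    · simp [h0]
    · have h1 : p.1 ∈ Function.support u := fun h => h0 (by simp [h])
      have h2 : p.2 ∈ Function.support v := fun h => h0 (by simp [h])
      rw [(bmp a k).support_normed_eq] at h1
      rw [(bmp b k).support_normed_eq] at h2
      have h1' : dist p.1 a < 1 / ((k : ℝ) + 1) := h1
      have h2' : dist p.2 b < 1 / ((k : ℝ) + 1) := h2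
      have h3 : dist p (a, b) < δ := by
        rw [Prod.dist_eq]
        exact max_lt (h1'.trans hkk) (h2'.trans hkk)
      have h4 := hd h3
      rw [dist_eq_norm] at h4
      exact mul_le_mul_of_nonneg_left h4.le (mul_nonneg hu0 hv0)
  rw [integral_mul_const, huv1] at hle
  linarith

theorem psi_sub {n : ℕ} {Ω : Set (EuclideanSpace ℝ (Fin n))} (hop : IsOpen Ω) (a : EuclideanSpace ℝ (Fin n)) (ha : a ∈ Ω) :
    ∀ᶠ k in Filter.atTop, tsupport (psi a k) ⊆ Ω := by
  obtain ⟨δ, hδ, hd⟩ := Metric.isOpen_iff.1 hop a ha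
  have hk : ∀ᶠ k : ℕ in Filter.atTop, 1 / ((k : ℝ) + 1) < δ :=
    tendsto_one_div_add_atTop_nhds_zero_nat.eventually (gt_mem_nhds hδ)
  filter_upwards [hk] with k hk
  exact (psi_tsupport a k).trans ((Metric.closedBall_subset_ball hk).trans hd)

theorem backward {n : ℕ} {Ω : Set (EuclideanSpace ℝ (Fin n))} (hop : IsOpen Ω) {F : (EuclideanSpace ℝ (Fin n)) → ℂ}
    (hF : ContinuousOn F (Ω - Ω))
    (h : ∀ f : (EuclideanSpace ℝ (Fin n)) → ℂ, ContDiff ℝ (⊤ : ℕ∞) f → HasCompactSupport f → tsupport f ⊆ Ω →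
      (∫ p, GK F f f p ∂(volume.prod volume)) ∈ PCone) : PosDefOn Ω F := by
  intro N x c hx
  change (∑ i, ∑ j, (starRingEnd ℂ) (c i) * c j * F (x i - x j)) ∈ PCone
  have lim : Filter.Tendsto (fun k => ∑ i, ∑ j, (starRingEnd ℂ) (c i) * c j *
      ∫ p, GK F (psi (x i) k) (psi (x j) k) p ∂(volume.prod volume)) Filter.atTop
      (nhds (∑ i, ∑ j, (starRingEnd ℂ) (c i) * c j * F (x i - x j))) := by
    refine tendsto_finsetSum _ fun i _ => tendsto_finsetSum _ fun j _ => ?_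
    exact (psi_lim hop hF _ _ (hx i) (hx j) (psi_sub hop _ (hx i))
      (psi_sub hop _ (hx j))).const_mul _
  refine isClosed_PCone.mem_of_tendsto lim ?_
  have hall : ∀ᶠ k in Filter.atTop, ∀ i, tsupport (psi (x i) k) ⊆ Ω :=
    Filter.eventually_all.2 fun i => psi_sub hop _ (hx i)
  filter_upwards [hall] with k hk
  let f : (EuclideanSpace ℝ (Fin n)) → ℂ := fun y => ∑ i, c i * psi (x i) k y
  have hfd : ContDiff ℝ (⊤ : ℕ∞) f :=
    ContDiff.sum fun i _ => contDiff_const.mul (psi_contDiff (x i) k)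
  have hcomp : IsCompact (⋃ i, tsupport (psi (x i) k)) :=
    isCompact_iUnion fun i => (psi_cs (x i) k).isCompact
  have hts : tsupport f ⊆ ⋃ i, tsupport (psi (x i) k) := by
    refine closure_minimal ?_ hcomp.isClosed
    intro y hy
    by_contra hn
    apply hy
    refine Finset.sum_eq_zero fun i _ => ?_
    rw [image_eq_zero_of_notMem_tsupport (fun hh => hn (Set.mem_iUnion.2 ⟨i, hh⟩)), mul_zero]
  have := h f hfd (hcomp.of_isClosed_subset (isClosed_tsupport _) hts)
    (hts.trans (Set.iUnion_subset hk))
  have e : (∫ p, GK F f f p ∂(volume.prod volume)) = ∑ i, ∑ j, (starRingEnd ℂ) (c i) * c j *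
      ∫ p, GK F (psi (x i) k) (psi (x j) k) p ∂(volume.prod volume) := by
    have hi : ∀ i j, Integrable (fun p => (starRingEnd ℂ) (c i) * c j *
        GK F (psi (x i) k) (psi (x j) k) p) (volume.prod volume) := fun i j =>
      (GK_int hop hF (psi_contDiff _ k).continuous (psi_contDiff _ k).continuous
        (psi_cs _ k) (psi_cs _ k) (hk i) (hk j)).const_mul _
    have e2 : ∀ p, GK F f f p = ∑ i, ∑ j, (starRingEnd ℂ) (c i) * c j *
        GK F (psi (x i) k) (psi (x j) k) p := by
      intro p
      simp only [GK, f, map_sum, map_mul]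
      rw [Finset.sum_mul_sum, Finset.sum_mul]
      refine Finset.sum_congr rfl fun i _ => ?_
      rw [Finset.sum_mul]
      refine Finset.sum_congr rfl fun j _ => ?_
      ring
    simp_rw [e2]
    rw [integral_finsetSum _ fun i _ => integrable_finsetSum _ fun j _ => hi i j]
    refine Finset.sum_congr rfl fun i _ => ?_
    rw [integral_finsetSum _ fun j _ => hi i j]
    refine Finset.sum_congr rfl fun j _ => ?_
    rw [integral_const_mul]
  rw [← e]
  exact this

theorem stmt_0 (n : ℕ) (hn : 1 ≤ n) (Ω : Set (EuclideanSpace ℝ (Fin n)))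
    (hne : Ω.Nonempty) (hop : IsOpen Ω)
    (F : EuclideanSpace ℝ (Fin n) → ℂ)
    (hF : ContinuousOn F (Ω - Ω)) :
    PosDefOn Ω F ↔
      ∀ φ : EuclideanSpace ℝ (Fin n) → ℂ,
        ContDiff ℝ (⊤ : ℕ∞) φ → HasCompactSupport φ → tsupport φ ⊆ Ω →
        (∫ x in Ω, ∫ y in Ω, (starRingEnd ℂ) (φ x) * φ y * F (x - y)).im = 0 ∧
        0 ≤ (∫ x in Ω, ∫ y in Ω, (starRingEnd ℂ) (φ x) * φ y * F (x - y)).re := by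
  constructor
  · intro h φ hφ hc hs
    rw [iter_eq hop hF hφ.continuous hc hs]
    exact forward hne hop hF h hφ.continuous hc hs
  · intro h
    refine backward hop hF fun f hf hc hs => ?_
    have := h f hf hc hs
    rw [iter_eq hop hF hf.continuous hc hs] at this
    exact this
end
end

section
/- (Pólya's theorem) Let f : ℝ → ℝ be continuous with f(0) = 1, f(−t) = f(t) for all t ∈ ℝ, f(t) → 0 as t → ∞, and f convex on [0, ∞). Then there exists a Borel probability measure μ on ℝ such that f(t) = ∫_ℝ e^{iλt} dμ(λ) for all t ∈ ℝ; in particular, f is positive definite on ℝ. -/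
open MeasureTheory Complex Filter

noncomputable section

/-- `F` is positive definite on all of `ℝ`. -/
def PosDefOnReal (F : ℝ → ℂ) : Prop :=
  ∀ (N : ℕ) (x : Fin N → ℝ) (c : Fin N → ℂ),
    (∑ i, ∑ j, (starRingEnd ℂ) (c i) * c j * F (x i - x j)).im = 0 ∧
    0 ≤ (∑ i, ∑ j, (starRingEnd ℂ) (c i) * c j * F (x i - x j)).re


def IsCF (g : ℝ → ℝ) : Prop :=
  ∃ μ : Measure ℝ, IsFiniteMeasure μ ∧ ∀ t : ℝ, charFun μ t = (g t : ℂ)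

lemma IsCF.add {g h : ℝ → ℝ} (hg : IsCF g) (hh : IsCF h) : IsCF (fun t => g t + h t) := by
  obtain ⟨μ, hμ, h1⟩ := hg
  obtain ⟨ν, hν, h2⟩ := hh
  refine ⟨μ + ν, inferInstance, fun t => ?_⟩
  push_cast
  rw [← h1, ← h2, charFun_eq_integral_innerProbChar, charFun_eq_integral_innerProbChar,
    charFun_eq_integral_innerProbChar, integral_add_measure]
  · exact BoundedContinuousFunction.integrable μ _
  · exact BoundedContinuousFunction.integrable ν _

lemma IsCF.smul {g : ℝ → ℝ} (hg : IsCF g) {c : ℝ} (hc : 0 ≤ c) : IsCF (fun t => c * g t) := by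
  obtain ⟨μ, hμ, h1⟩ := hg
  refine ⟨Real.toNNReal c • μ, inferInstance, fun t => ?_⟩
  push_cast
  rw [← h1, charFun_eq_integral_innerProbChar, charFun_eq_integral_innerProbChar,
    integral_smul_nnreal_measure]
  simp [NNReal.smul_def, hc]

lemma IsCF.scale {g : ℝ → ℝ} (hg : IsCF g) (r : ℝ) : IsCF (fun t => g (r * t)) := by
  obtain ⟨μ, hμ, h1⟩ := hg
  refine ⟨μ.map (r * ·), inferInstance, fun t => ?_⟩
  rw [charFun_map_mul, h1]

lemma IsCF.const {c : ℝ} (hc : 0 ≤ c) : IsCF (fun _ => c) := by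
  have : IsCF (fun _ => 1) := ⟨Measure.dirac 0, inferInstance, fun t => by simp [charFun_dirac]⟩
  simpa using this.smul hc

lemma IsCF.sum {g : ℕ → ℝ → ℝ} (n : ℕ) (hg : ∀ k < n, IsCF (g k)) :
    IsCF (fun t => ∑ k ∈ Finset.range n, g k t) := by
  induction n with
  | zero => simpa using IsCF.const le_rfl
  | succ n ih =>
    simp_rw [Finset.sum_range_succ]
    exact (ih fun k hk => hg k (by omega)).add (hg n (by omega))

def tri (t : ℝ) : ℝ := max 0 (1 - |t|)

lemma tri_cont : Continuous tri := by unfold tri; fun_prop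

lemma tri_int : Integrable (fun t => (tri t : ℂ)) := by
  refine Continuous.integrable_of_hasCompactSupport (by have := tri_cont; fun_prop) ?_
  refine HasCompactSupport.intro (isCompact_Icc (a := (-1:ℝ)) (b := 1)) fun x hx => ?_
  have : tri x = 0 := by
    unfold tri
    rw [max_eq_left]
    by_contra h
    push Not at h
    apply hx
    have := abs_lt.1 (show |x| < 1 by linarith)
    exact ⟨this.1.le, this.2.le⟩
  simp [this]

open FourierTransform in
lemma tri_fourier (w : ℝ) (hw : w ≠ 0) :
    𝓕 (fun t => (tri t : ℂ)) w =
      ((2 * (1 - Real.cos (2 * Real.pi * w)) / (2 * Real.pi * w) ^ 2 : ℝ) : ℂ) := by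
  rw [Real.fourier_eq']
  set a : ℝ := 2 * Real.pi * w with ha
  have ha0 : (a : ℂ) ≠ 0 := by
    have := Real.pi_ne_zero
    exact_mod_cast (by positivity : a ≠ 0)
  have e1 : (∫ v : ℝ, Complex.exp (↑(-2 * Real.pi * inner ℝ v w) * Complex.I) • (tri v : ℂ))
      = ∫ v in (-1:ℝ)..1, Complex.exp (-(a * Complex.I) * v) * (tri v : ℂ) := by
    rw [intervalIntegral.integral_of_le (by norm_num), setIntegral_eq_integral_of_forall_compl_eq_zero]
    · congr 1
      ext v
      simp [ha]
      left
      congr 1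
      ring
    · intro x hx
      have : tri x = 0 := by
        unfold tri
        rw [max_eq_left]
        by_contra h
        push Not at h
        apply hx
        have := abs_lt.1 (show |x| < 1 by linarith)
        exact ⟨this.1, this.2.le⟩
      simp [this]
  rw [e1, ← intervalIntegral.integral_add_adjacent_intervals (b := 0)]
  rotate_left
  · apply Continuous.intervalIntegrable
    have := tri_cont
    fun_prop
  · apply Continuous.intervalIntegrable
    have := tri_cont
    fun_prop
  have hd : ∀ s : ℂ, ∀ v : ℝ, HasDerivAt (fun v : ℝ => 
      Complex.exp (-(a * Complex.I) * v) * ((1 + s * v) / (-(a * Complex.I)) - s / (-(a * Complex.I))^2))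
      (Complex.exp (-(a * Complex.I) * v) * (1 + s * v)) v := by
    intro s v
    have hc : HasDerivAt (fun v : ℂ => 
      Complex.exp (-(a * Complex.I) * v) * ((1 + s * v) / (-(a * Complex.I)) - s / (-(a * Complex.I))^2))
      (Complex.exp (-(a * Complex.I) * v) * (1 + s * v)) (v:ℂ) := by
      have h1 : HasDerivAt (fun v : ℂ => -(a * Complex.I) * v) (-(a * Complex.I)) (v:ℂ) := by
        simpa using (hasDerivAt_id (v:ℂ)).const_mul (-(a * Complex.I))
      have h2 : HasDerivAt (fun v : ℂ => (1 + s * v) / (-(a * Complex.I)) - s / (-(a * Complex.I))^2)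
        (s / (-(a * Complex.I))) (v:ℂ) := by
        simpa using ((((hasDerivAt_id (v:ℂ)).const_mul s).const_add 1).div_const (-(a * Complex.I))).sub_const (s / (-(a * Complex.I))^2)
      refine (h1.cexp.mul h2).congr_deriv ?_
      have hI := Complex.I_ne_zero
      have hz : -(a * Complex.I) ≠ 0 := by simp [ha0]
      generalize -(a * Complex.I) = z at *
      field_simp
      ring
    exact hc.comp_ofReal
  have i1 : ∫ v in (-1:ℝ)..0, Complex.exp (-(a * Complex.I) * v) * (tri v : ℂ) = 
      ∫ v in (-1:ℝ)..0, Complex.exp (-(a * Complex.I) * v) * (1 + 1 * v) := by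
    apply intervalIntegral.integral_congr
    intro v hv
    rw [Set.uIcc_of_le (by norm_num)] at hv
    have : tri v = 1 + v := by
      unfold tri
      rw [abs_of_nonpos hv.2, max_eq_right] <;> linarith [hv.1]
    simp [this]
  have i2 : ∫ v in (0:ℝ)..1, Complex.exp (-(a * Complex.I) * v) * (tri v : ℂ) = 
      ∫ v in (0:ℝ)..1, Complex.exp (-(a * Complex.I) * v) * (1 + (-1) * v) := by
    apply intervalIntegral.integral_congr
    intro v hv
    rw [Set.uIcc_of_le (by norm_num)] at hv
    have : tri v = 1 + (-1) * v := by
      unfold tri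
      rw [abs_of_nonneg hv.1, max_eq_right] <;> linarith [hv.2]
    simp [this]
  rw [i1, i2, intervalIntegral.integral_eq_sub_of_hasDerivAt (fun x _ => hd 1 x),
    intervalIntegral.integral_eq_sub_of_hasDerivAt (fun x _ => hd (-1) x)]
  rotate_left
  · apply Continuous.intervalIntegrable
    fun_prop
  · apply Continuous.intervalIntegrable
    fun_prop
  push_cast
  rw [Complex.cos]
  have := Complex.I_ne_zero
  simp only [mul_zero, mul_neg, neg_mul, neg_neg, mul_one, Complex.exp_zero]
  field_simp
  simp only [Complex.I_sq]
  ring_nf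
  try simp only [Complex.I_sq]
  try ring_nf

open FourierTransform in
lemma isCF_tri : IsCF tri := by
  set F : ℝ → ℂ := 𝓕 (fun t => (tri t : ℂ)) with hF
  have hFc : Continuous F := by
    exact VectorFourier.fourierIntegral_continuous Real.continuous_fourierChar
      (by exact continuous_inner) tri_int
  set G : ℝ → ℝ := fun w => (F w).re with hG
  have hGF0 : ∀ w, w ≠ 0 → F w = (G w : ℂ) ∧ 0 ≤ G w := by
    intro w hw
    have := tri_fourier w hw
    rw [hG]
    simp only
    rw [hF, this]
    refine ⟨by rw [Complex.ofReal_re], ?_⟩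
    rw [Complex.ofReal_re]
    have := Real.cos_le_one (2 * Real.pi * w)
    exact div_nonneg (by linarith) (by positivity)
  have hae : ∀ᵐ w : ℝ, w ≠ 0 := by
    simp [ae_iff]
  have hFi : Integrable F := by
    obtain ⟨C, hC⟩ : ∃ C, ∀ w, ‖F w‖ ≤ C := 
      ⟨_, fun w => VectorFourier.norm_fourierIntegral_le_integral_norm _ _ _ _ w⟩
    refine Integrable.mono' (integrable_inv_one_add_sq.const_mul (C + 4)) 
      hFc.aestronglyMeasurable ?_
    filter_upwards [hae] with w hw
    have h1 := hC w
    have h2 : ‖F w‖ * w ^ 2 ≤ 4 := by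
      rw [hF, tri_fourier w hw, Complex.norm_real, Real.norm_eq_abs, abs_of_nonneg, 
        div_mul_eq_mul_div, div_le_iff₀]
      · have := Real.neg_one_le_cos (2 * Real.pi * w)
        have := Real.pi_gt_three
        have h3 : w ^ 2 ≤ (2 * Real.pi * w) ^ 2 := by
          rw [mul_pow]
          have : 1 ≤ (2 * Real.pi) ^ 2 := by nlinarith
          nlinarith [sq_nonneg w]
        nlinarith [sq_nonneg w]
      · have := Real.pi_ne_zero
        positivity
      · have := Real.cos_le_one (2 * Real.pi * w)
        exact div_nonneg (by linarith) (by positivity)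
    rw [← div_eq_mul_inv, le_div_iff₀ (by positivity)]
    linarith
  have hinv := tri_cont
  have hinv : 𝓕⁻ F = fun t => (tri t : ℂ) :=
    Continuous.fourierInv_fourier_eq (by fun_prop) tri_int hFi
  have hGi : Integrable G := hFi.re
  have key : IsCF (fun t => tri ((2 * Real.pi)⁻¹ * t)) := by
    refine ⟨volume.withDensity (fun w => ENNReal.ofReal (G w)), 
      isFiniteMeasure_withDensity_ofReal hGi.2, fun t => ?_⟩
    have := congrFun hinv ((2 * Real.pi)⁻¹ * t)
    rw [← this, charFun_apply_real, Real.fourierInv_eq',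
      integral_withDensity_eq_integral_toReal_smul₀ hGi.aemeasurable.ennreal_ofReal (by simp)]
    apply integral_congr_ae
    filter_upwards [hae] with w hw
    obtain ⟨h1, h2⟩ := hGF0 w hw
    rw [ENNReal.toReal_ofReal h2, h1]
    simp only [Complex.real_smul, smul_eq_mul]
    rw [mul_comm]
    congr 2
    have := Real.pi_ne_zero
    simp
    field_simp
  have := key.scale (2 * Real.pi)
  convert this using 2 with t
  have := Real.pi_ne_zero
  field_simp

lemma exists_of_tendsto {μ : ℕ → Measure ℝ} (hμ : ∀ n, IsProbabilityMeasure (μ n)) {f : ℝ → ℂ}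
    (hf : Continuous f) (h : ∀ t, Tendsto (fun n => charFun (μ n) t) atTop (nhds (f t))) :
    ∃ ν : Measure ℝ, IsProbabilityMeasure ν ∧ ∀ t, charFun ν t = f t := by
  have ht := isTightMeasureSet_of_tendsto_charFun hf.continuousAt h
  let p : ℕ → ProbabilityMeasure ℝ := fun n => ⟨μ n, hμ n⟩
  have hc : IsCompact (closure (Set.range p)) := by
    apply isCompact_closure_of_isTightMeasureSet
    convert ht using 1
    ext m
    constructor
    · rintro ⟨_, ⟨n, rfl⟩, rfl⟩
      exact ⟨n, rfl⟩
    · rintro ⟨n, rfl⟩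
      exact ⟨p n, ⟨n, rfl⟩, rfl⟩
  obtain ⟨ν, -, hν⟩ := hc.ultrafilter_le_nhds ((hyperfilter ℕ).map p)
    (le_trans (by simp) (monotone_principal subset_closure))
  have hν : Tendsto p (hyperfilter ℕ) (nhds ν) := hν
  refine ⟨ν, inferInstance, fun t => ?_⟩
  rw [ProbabilityMeasure.tendsto_iff_forall_integral_rclike_tendsto ℂ] at hν
  have h1 := hν (BoundedContinuousFunction.innerProbChar t)
  have h2 := (h t).mono_left (Nat.hyperfilter_le_atTop)
  simp_rw [charFun_eq_integral_innerProbChar] at h2 ⊢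
  exact tendsto_nhds_unique h1 h2

lemma conv_antitone {f : ℝ → ℝ} (hlim : Tendsto f atTop (nhds 0))
    (hconv : ConvexOn ℝ (Set.Ici (0 : ℝ)) f) {x y : ℝ} (hx : 0 ≤ x) (hxy : x ≤ y) :
    f y ≤ f x := by
  rcases hxy.eq_or_lt with rfl | hxy
  · exact le_rfl
  have hz : Tendsto (fun z : ℝ => (y - x) * (z - x)⁻¹) atTop (nhds 0) := by
    have h1 : Tendsto (fun z : ℝ => z - x) atTop atTop := by
      simpa [sub_eq_add_neg] using tendsto_atTop_add_const_right atTop (-x) tendsto_id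
    simpa using (tendsto_inv_atTop_zero.comp h1).const_mul (y - x)
  have hl : Tendsto (fun z : ℝ => (1 - (y - x) * (z - x)⁻¹) * f x + ((y - x) * (z - x)⁻¹) * f z)
      atTop (nhds (f x)) := by
    simpa using ((hz.const_sub 1).mul_const (f x)).add (hz.mul hlim)
  refine ge_of_tendsto hl ?_
  filter_upwards [eventually_gt_atTop y] with z hyz
  have hzx : 0 < z - x := by linarith
  have h1 : (y - x) * (z - x)⁻¹ ≤ 1 := by
    rw [← div_eq_mul_inv, div_le_one hzx]; linarith
  have h2 : 0 ≤ (y - x) * (z - x)⁻¹ := mul_nonneg (by linarith) (by positivity)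
  have := hconv.2 (show x ∈ Set.Ici (0:ℝ) from hx) (show z ∈ Set.Ici (0:ℝ) from (by simp; linarith))
    (sub_nonneg.2 h1) h2 (by ring)
  simp only [smul_eq_mul] at this
  convert this using 2
  field_simp
  ring

/-- scaled triangle `max 0 (k - |t|/h)`. -/
def Pk (h : ℝ) (k : ℕ) (t : ℝ) : ℝ := max 0 (k - |t| / h)

lemma Pk_anti {h : ℝ} (hh : 0 < h) (k : ℕ) {s t : ℝ} (hs : 0 ≤ s) (hst : s ≤ t) :
    Pk h k t ≤ Pk h k s := by
  unfold Pk
  rw [abs_of_nonneg hs, abs_of_nonneg (hs.trans hst)]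
  gcongr

lemma Pk_node {h : ℝ} (hh : 0 < h) (k j : ℕ) : Pk h k (j * h) = max 0 ((k:ℝ) - j) := by
  unfold Pk
  rw [abs_of_nonneg (by positivity), mul_div_assoc, div_self hh.ne', mul_one]

lemma Pk_cf {h : ℝ} (hh : 0 < h) (k : ℕ) : IsCF (Pk h k) := by
  rcases Nat.eq_zero_or_pos k with rfl | hk
  · convert IsCF.const le_rfl using 1
    ext t
    have : 0 ≤ |t| / h := by positivity
    simp [Pk, this]
  · have hk' : (0:ℝ) < k := by exact_mod_cast hk
    convert (isCF_tri.scale (1 / (k * h))).smul hk'.le using 1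
    ext t
    unfold Pk tri
    rw [mul_max_of_nonneg _ _ hk'.le, abs_mul, abs_of_pos (show 0 < 1 / (k * h) by positivity)]
    congr 1
    · simp
    · field_simp

def HM (a : ℕ → ℝ) (h : ℝ) (M : ℕ) (t : ℝ) : ℝ :=
  a M + ∑ k ∈ Finset.range M, (a k - 2 * a (k+1) + a (k+2)) * Pk h (k+1) t
    + (a M - a (M+1)) * Pk h M t

lemma HM_node (a : ℕ → ℝ) {h : ℝ} (hh : 0 < h) (M j : ℕ) (hj : j ≤ M) :
    HM a h M (j * h) = a j := by
  induction M, hj using Nat.le_induction with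
  | base =>
    unfold HM
    rw [Finset.sum_eq_zero]
    · simp [Pk_node hh]
    · intro k hk
      have : ((k:ℝ) + 1) ≤ j := by exact_mod_cast Finset.mem_range.1 hk
      rw [Pk_node hh, max_eq_left (by push_cast; linarith), mul_zero]
  | succ M hM ih =>
    rw [← ih]
    unfold HM
    have : (j:ℝ) ≤ M := by exact_mod_cast hM
    rw [Finset.sum_range_succ, Pk_node hh, Pk_node hh M, 
      max_eq_right (by push_cast; linarith), max_eq_right (by linarith)]
    push_cast
    ring

lemma HM_cf (a : ℕ → ℝ) {h : ℝ} (hh : 0 < h) (M : ℕ) (h0 : ∀ k, 0 ≤ a k)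
    (h1 : ∀ k, a (k+1) ≤ a k) (h2 : ∀ k, 0 ≤ a k - 2 * a (k+1) + a (k+2)) :
    IsCF (HM a h M) := 
  ((IsCF.const (h0 M)).add (IsCF.sum M fun k _ => (Pk_cf hh (k+1)).smul (h2 k))).add
    ((Pk_cf hh M).smul (sub_nonneg.2 (h1 M)))

lemma HM_anti (a : ℕ → ℝ) {h : ℝ} (hh : 0 < h) (M : ℕ) 
    (h1 : ∀ k, a (k+1) ≤ a k) (h2 : ∀ k, 0 ≤ a k - 2 * a (k+1) + a (k+2)) 
    {s t : ℝ} (hs : 0 ≤ s) (hst : s ≤ t) : HM a h M t ≤ HM a h M s := by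
  unfold HM
  have := h1 M
  gcongr with k
  · exact h2 k
  · exact Pk_anti hh _ hs hst
  · exact Pk_anti hh _ hs hst

lemma HM_abs (a : ℕ → ℝ) (h : ℝ) (M : ℕ) (t : ℝ) : HM a h M |t| = HM a h M t := by
  simp [HM, Pk]

lemma polya_exists (f : ℝ → ℝ) (hcont : Continuous f) (h0 : f 0 = 1)
    (heven : ∀ t : ℝ, f (-t) = f t)
    (hlim : Tendsto f atTop (nhds 0))
    (hconv : ConvexOn ℝ (Set.Ici (0 : ℝ)) f) :
    ∃ μ : Measure ℝ, IsProbabilityMeasure μ ∧ ∀ t : ℝ, charFun μ t = (f t : ℂ) := by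
  have hanti : ∀ {x y : ℝ}, 0 ≤ x → x ≤ y → f y ≤ f x := fun hx hxy => 
    conv_antitone hlim hconv hx hxy
  have hnn : ∀ x, 0 ≤ x → 0 ≤ f x := fun x hx => le_of_tendsto hlim (by
    filter_upwards [eventually_ge_atTop x] with y hy using hanti hx hy)
  let h : ℕ → ℝ := fun n => 1 / ((n:ℝ) + 1)
  have hh : ∀ n, 0 < h n := fun n => by positivity
  have hh0 : Tendsto h atTop (nhds 0) := tendsto_one_div_add_atTop_nhds_zero_nat
  let a : ℕ → ℕ → ℝ := fun n k => f (k * h n)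
  have ha0 : ∀ n k, 0 ≤ a n k := fun n k => hnn _ (by have := hh n; positivity)
  have ha1 : ∀ n k, a n (k+1) ≤ a n k := fun n k => hanti (by have := hh n; positivity) (by
    have := hh n; push_cast; nlinarith)
  have ha2 : ∀ n k, 0 ≤ a n k - 2 * a n (k+1) + a n (k+2) := fun n k => by
    have hp := hh n
    have := hconv.2 (show (k * h n : ℝ) ∈ Set.Ici (0:ℝ) from (by simp; positivity)) 
      (show (((k + 2 : ℕ) : ℝ) * h n : ℝ) ∈ Set.Ici (0:ℝ) from (by simp; positivity))
      (show (0:ℝ) ≤ 1/2 by norm_num) (show (0:ℝ) ≤ 1/2 by norm_num) (by norm_num)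
    have e : (1/2 : ℝ) • (k * h n : ℝ) + (1/2 : ℝ) • (((k + 2 : ℕ) : ℝ) * h n : ℝ) 
      = ((k+1 : ℕ) : ℝ) * h n := by simp only [smul_eq_mul]; push_cast; ring
    rw [e] at this
    simp only [smul_eq_mul] at this
    simp only [a]
    linarith
  have hcf : ∀ n, IsCF (HM (a n) (h n) ((n+1)^2)) := fun n => 
    HM_cf _ (hh n) _ (ha0 n) (ha1 n) (ha2 n)
  choose μ hμ1 hμ2 using hcf
  have hμp : ∀ n, IsProbabilityMeasure (μ n) := fun n => by
    have e := hμ2 n 0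
    have e2 := HM_node (a n) (hh n) ((n+1)^2) 0 (Nat.zero_le _)
    simp only [Nat.cast_zero, zero_mul] at e2
    rw [e2, charFun_zero] at e
    simp only [a, Nat.cast_zero, zero_mul, h0] at e
    have e3 : (μ n).real Set.univ = 1 := by exact_mod_cast e
    exact ⟨by rwa [measureReal_def, ENNReal.toReal_eq_one_iff] at e3⟩
  refine exists_of_tendsto hμp (f := fun t => (f t : ℂ)) (by fun_prop) fun t => ?_
  simp_rw [hμ2]
  refine (Complex.continuous_ofReal.tendsto _).comp ?_
  have hfabs : f |t| = f t := by
    rcases abs_choice t with e | e <;> rw [e]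
    exact heven t
  simp_rw [← hfabs, ← HM_abs _ _ _ t]
  have ht : 0 ≤ |t| := abs_nonneg t
  generalize |t| = s at ht
  let j : ℕ → ℕ := fun n => ⌊s / h n⌋₊
  have hj1 : ∀ n, j n * h n ≤ s := fun n => by
    rw [← le_div_iff₀ (hh n)]
    exact Nat.floor_le (div_nonneg ht (hh n).le)
  have hj2 : ∀ n, s ≤ (j n + 1 : ℕ) * h n := fun n => by
    rw [← div_le_iff₀ (hh n)]
    push_cast
    exact (Nat.lt_floor_add_one _).le
  have hl1 : Tendsto (fun n => (j n * h n : ℝ)) atTop (nhds s) := by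
    refine tendsto_of_tendsto_of_tendsto_of_le_of_le (g := fun n => s - h n) (by simpa using hh0.const_sub s) 
      tendsto_const_nhds (fun n => ?_) hj1
    have := hj2 n
    push_cast at this
    simp only
    linarith
  have hl2 : Tendsto (fun n => ((j n + 1 : ℕ) * h n : ℝ)) atTop (nhds s) := by
    have := hl1.add hh0
    simp only [add_zero] at this
    convert this using 2
    push_cast
    ring
  refine tendsto_of_tendsto_of_tendsto_of_le_of_le' ((hcont.tendsto s).comp hl2)
    ((hcont.tendsto s).comp hl1) ?_ ?_
  all_goals
    filter_upwards [eventually_ge_atTop ⌈s⌉₊] with n hn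
    have hsn : s ≤ n := Nat.ceil_le.1 hn
    have hjM : j n + 1 ≤ (n+1)^2 := by
      have h3 : (j n : ℝ) ≤ n * (n + 1) := by
        refine (Nat.floor_le (div_nonneg ht (hh n).le)).trans ?_
        simp only [h, div_div_eq_mul_div, div_one]
        gcongr
      have : j n ≤ n * (n + 1) := by exact_mod_cast h3
      nlinarith
    have hp := hh n
    simp only [Function.comp]
  · rw [show f ((j n + 1 : ℕ) * h n) = a n (j n + 1) from rfl, ← HM_node (a n) hp _ _ hjM]
    exact HM_anti _ hp _ (ha1 n) (ha2 n) ht (hj2 n)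
  · rw [show f (j n * h n) = a n (j n) from rfl, ← HM_node (a n) hp _ _ (by omega : j n ≤ (n+1)^2)]
    exact HM_anti _ hp _ (ha1 n) (ha2 n) (by positivity) (hj1 n)

lemma posDef_of {F : ℝ → ℂ} (μ : Measure ℝ) [IsProbabilityMeasure μ]
    (hF : ∀ t : ℝ, F t = ∫ l, Complex.exp (Complex.I * (l : ℂ) * (t : ℂ)) ∂μ) :
    PosDefOnReal F := by
  intro N x c
  have hi : ∀ t : ℝ, Integrable (fun l : ℝ => Complex.exp (Complex.I * (l : ℂ) * (t : ℂ))) μ := by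
    intro t
    refine Integrable.of_bound (by fun_prop) 1 (ae_of_all _ fun l => ?_)
    rw [show Complex.I * (l : ℂ) * (t : ℂ) = ((l * t : ℝ) : ℂ) * Complex.I by push_cast; ring,
      Complex.norm_exp_ofReal_mul_I]
  have key : (∑ i, ∑ j, (starRingEnd ℂ) (c i) * c j * F (x i - x j)) = 
      ((∫ l, ‖∑ j, c j * Complex.exp (-(Complex.I * (l : ℂ) * (x j : ℂ)))‖ ^ 2 ∂μ : ℝ) : ℂ) := by
    rw [← integral_complex_ofReal]
    simp_rw [hF, ← integral_const_mul]
    have : ∀ i, ∑ j, ∫ l : ℝ, (starRingEnd ℂ) (c i) * c j * 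
        Complex.exp (Complex.I * (l : ℂ) * ((x i - x j : ℝ) : ℂ)) ∂μ = 
        ∫ l : ℝ, ∑ j, (starRingEnd ℂ) (c i) * c j * 
        Complex.exp (Complex.I * (l : ℂ) * ((x i - x j : ℝ) : ℂ)) ∂μ := fun i => 
      (integral_finsetSum _ fun j _ => (hi _).const_mul _).symm
    simp_rw [this]
    rw [← integral_finsetSum _ fun i _ => integrable_finsetSum _ fun j _ => (hi _).const_mul _]
    congr 1
    ext l
    push_cast
    rw [← Complex.conj_mul', map_sum, Finset.sum_mul_sum]
    refine Finset.sum_congr rfl fun i _ => Finset.sum_congr rfl fun j _ => ?_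
    rw [map_mul, ← Complex.exp_conj]
    simp only [map_neg, map_mul, Complex.conj_I, Complex.conj_ofReal]
    rw [mul_mul_mul_comm, ← Complex.exp_add]
    congr 2
    ring
  rw [key]
  refine ⟨Complex.ofReal_im _, ?_⟩
  rw [Complex.ofReal_re]
  exact integral_nonneg fun l => by positivity

theorem stmt_3 (f : ℝ → ℝ) (hcont : Continuous f) (h0 : f 0 = 1)
    (heven : ∀ t : ℝ, f (-t) = f t)
    (hlim : Tendsto f atTop (nhds 0))
    (hconv : ConvexOn ℝ (Set.Ici (0 : ℝ)) f) :
    (∃ μ : Measure ℝ, IsProbabilityMeasure μ ∧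
      ∀ t : ℝ, (f t : ℂ) = ∫ l, Complex.exp (Complex.I * (l : ℂ) * (t : ℂ)) ∂μ) ∧
    PosDefOnReal (fun t => (f t : ℂ)) := by
  obtain ⟨μ, hμ, h⟩ := polya_exists f hcont h0 heven hlim hconv
  have h' : ∀ t : ℝ, (f t : ℂ) = ∫ l, Complex.exp (Complex.I * (l : ℂ) * (t : ℂ)) ∂μ := by
    intro t
    rw [← h, charFun_apply_real]
    congr 1
    ext l
    congr 1
    ring
  exact ⟨⟨μ, hμ, h'⟩, posDef_of μ h'⟩
end
end

section
/- Let a > 0 and let F : ℝ → ℂ be real-analytic on some open neighborhood of 0. If μ and ν are finite positive Borel measures on ℝ such that ∫_ℝ e^{iλx} dμ(λ) = F(x) and ∫_ℝ e^{iλx} dν(λ) = F(x) for all x ∈ (−a, a), then μ = ν. (In the paper's terminology: if F, given and positive definite on (−a,a), is analytic in a neighborhood of 0, then Ext(F) is a singleton and Ext₂(F) is empty.) -/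
open MeasureTheory Complex

noncomputable section

open Filter Topology ProbabilityTheory

lemma re_charFun_aux (μ : Measure ℝ) [IsFiniteMeasure μ] (t : ℝ) :
    (charFun μ t).re = ∫ x, Real.cos (t * x) ∂μ := by
  have hi : Integrable (fun x : ℝ => cexp (t * x * I)) μ := by
    refine Integrable.of_bound (C := 1) (by fun_prop) (ae_of_all _ fun x => ?_)
    rw [← ofReal_mul, Complex.norm_exp_ofReal_mul_I]
  rw [charFun_apply_real]
  have := integral_re hi
  simp only [RCLike.re_to_complex] at this
  rw [← this]
  congr with x
  rw [← ofReal_mul, Complex.exp_ofReal_mul_I_re]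

lemma diff_bound_aux (g : ℝ → ℂ) (h : AnalyticAt ℝ g 0) :
    ∃ C : ℝ, ∀ᶠ t : ℝ in 𝓝 0, ‖2 * g 0 - g t - g (-t)‖ ≤ C * t ^ 2 := by
  obtain ⟨p, hp⟩ := h
  have h1 := hp.isBigO_sub_partialSum_pow 2
  have hneg : Tendsto (fun t : ℝ => -t) (𝓝 0) (𝓝 0) := by
    simpa using (continuous_neg.tendsto (0 : ℝ))
  have h2 := h1.comp_tendsto hneg
  obtain ⟨C, hC⟩ := h1.bound
  obtain ⟨D, hD⟩ := h2.bound
  refine ⟨C + D, ?_⟩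
  filter_upwards [hC, hD] with t ht1 ht2
  simp only [Function.comp, zero_add, norm_neg, Real.norm_eq_abs, abs_pow, abs_abs, sq_abs] at ht1 ht2
  have hs : p.partialSum 2 t + p.partialSum 2 (-t) = 2 * g 0 := by
    have e0 : ∀ v, p 0 v = g 0 := fun v => hp.coeff_zero v
    have e1 : (p 1 fun _ => -t) = - p 1 fun _ => t := by
      have := (p 1).map_smul_univ (fun _ => (-1 : ℝ)) (fun _ => t)
      simpa using this
    simp only [FormalMultilinearSeries.partialSum, Finset.sum_range_succ, Finset.sum_range_zero, e0, e1]
    ring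
  calc ‖2 * g 0 - g t - g (-t)‖
      = ‖-((g t - p.partialSum 2 t) + (g (-t) - p.partialSum 2 (-t)))‖ := by
        rw [← hs]; congr 1; ring
    _ ≤ _ := by rw [norm_neg]; exact (norm_add_le _ _).trans (by linarith)

lemma sq_integrable_aux (μ : Measure ℝ) [IsFiniteMeasure μ] (h : AnalyticAt ℝ (charFun μ) 0) :
    Integrable (fun x : ℝ => x ^ 2) μ := by
  obtain ⟨C, hC⟩ := diff_bound_aux _ h
  have hci : ∀ t : ℝ, Integrable (fun x => 2 - 2 * Real.cos (t * x)) μ := by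
    intro t
    refine Integrable.of_bound (C := 4) (by fun_prop) (ae_of_all _ fun x => ?_)
    rw [Real.norm_eq_abs, abs_le]
    constructor <;> linarith [Real.neg_one_le_cos (t * x), Real.cos_le_one (t * x)]
  have hcc : ∀ t : ℝ, Integrable (fun x => Real.cos (t * x)) μ := by
    intro t
    refine Integrable.of_bound (C := 1) (by fun_prop) (ae_of_all _ fun x => ?_)
    exact Real.abs_cos_le_one _
  have hb : ∀ᶠ t : ℝ in 𝓝 0, ∫ x, (2 - 2 * Real.cos (t * x)) ∂μ ≤ C * t ^ 2 := by
    filter_upwards [hC] with t ht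
    refine le_trans (le_of_eq ?_) ((Complex.re_le_norm _).trans ht)
    have : ((2 : ℂ) * charFun μ 0).re = 2 * (charFun μ 0).re := by simp
    rw [Complex.sub_re, Complex.sub_re, this, re_charFun_aux, re_charFun_aux, re_charFun_aux]
    rw [integral_sub (integrable_const _) ((hcc t).const_mul 2), integral_const_mul]
    simp
    ring
  have hu : Tendsto (fun n : ℕ => ((n : ℝ) + 1)⁻¹) atTop (𝓝 0) := by
    simpa using tendsto_one_div_add_atTop_nhds_zero_nat (𝕜 := ℝ)
  have hn : Tendsto (fun n : ℕ => ((n : ℝ) + 1)) atTop atTop :=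
    tendsto_atTop_add_const_right _ _ tendsto_natCast_atTop_atTop
  have hcov := aecover_Icc (μ := μ) (tendsto_neg_atTop_atBot.comp hn) hn
  refine hcov.integrable_of_integral_bounded_of_nonneg_ae (C * Real.pi ^ 2 / 4)
    (fun n => ?_) (ae_of_all _ fun x => sq_nonneg x) ?_
  · exact (Continuous.continuousOn (by fun_prop)).integrableOn_compact isCompact_Icc
  · filter_upwards [hu.eventually hb] with n hn
    have hpos : (0 : ℝ) < (n : ℝ) + 1 := by positivity
    set t := ((n : ℝ) + 1)⁻¹ with ht
    have htpos : 0 < t := by positivity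
    have key : 4 / Real.pi ^ 2 * t ^ 2 * ∫ x in Set.Icc (-((n : ℝ) + 1)) (n + 1), x ^ 2 ∂μ
        ≤ C * t ^ 2 := by
      rw [← integral_const_mul]
      calc _ ≤ ∫ x in Set.Icc (-((n : ℝ) + 1)) (n + 1), (2 - 2 * Real.cos (t * x)) ∂μ := by
            refine setIntegral_mono_on ?_ (hci t).integrableOn measurableSet_Icc ?_
            · exact (Continuous.continuousOn (by fun_prop)).integrableOn_compact isCompact_Icc
            · intro x hx
              have hx' : |x| ≤ (n : ℝ) + 1 := abs_le.2 hx
              have : |t * x| ≤ Real.pi := by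
                rw [abs_mul, abs_of_pos htpos, ht, inv_mul_eq_div]
                exact ((div_le_one hpos).2 hx').trans (by linarith [Real.pi_gt_three])
              have := Real.cos_le_one_sub_mul_cos_sq this
              have e : 4 / Real.pi ^ 2 * t ^ 2 * x ^ 2 = 2 * (2 / Real.pi ^ 2 * (t * x) ^ 2) := by
                ring
              rw [e]; linarith
        _ ≤ ∫ x, (2 - 2 * Real.cos (t * x)) ∂μ :=
            setIntegral_le_integral (hci t) (ae_of_all _ fun x => by
              have := Real.cos_le_one (t * x)
              simp only [Pi.zero_apply]; linarith)
        _ ≤ _ := hn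
    have hpi := Real.pi_pos
    have k2 : t ^ 2 * (4 / Real.pi ^ 2 * ∫ x in Set.Icc (-((n : ℝ) + 1)) (n + 1), x ^ 2 ∂μ)
        ≤ t ^ 2 * C := by linarith
    have k3 := le_of_mul_le_mul_left k2 (by positivity)
    rw [div_mul_eq_mul_div, div_le_iff₀ (by positivity)] at k3
    simp only [Function.comp]
    linarith

lemma memLp_of_even_aux (μ : Measure ℝ) [IsFiniteMeasure μ] (n : ℕ)
    (h : Integrable (fun x : ℝ => x ^ (2 * n)) μ) : MemLp id ((2 * n : ℕ) : ENNReal) μ := by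
  rcases Nat.eq_zero_or_pos n with rfl | hn
  · simpa using (by fun_prop : AEStronglyMeasurable (id : ℝ → ℝ) μ)
  · rw [← integrable_norm_rpow_iff (by fun_prop) (by simp; omega) (ENNReal.natCast_ne_top _)]
    refine h.congr (ae_of_all _ fun x => ?_)
    simp [pow_mul, -Nat.cast_mul]

lemma even_moment_aux (μ : Measure ℝ) [IsFiniteMeasure μ] (h : AnalyticAt ℝ (charFun μ) 0) (n : ℕ) :
    Integrable (fun x : ℝ => x ^ (2 * n)) μ := by
  induction n with
  | zero => simp
  | succ n ih =>
    let w : ℝ → NNReal := fun x => Real.toNNReal (x ^ (2 * n))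
    have hw : Measurable w := by fun_prop
    have hwc : ∀ x, (w x : ℝ) = x ^ (2 * n) := fun x =>
      Real.coe_toNNReal _ (by rw [pow_mul]; positivity)
    let ρ := μ.withDensity (fun x => (w x : ENNReal))
    have hfin : IsFiniteMeasure ρ := by
      have : Integrable (fun _ : ℝ => (1 : ℝ)) ρ := by
        rw [integrable_withDensity_iff_integrable_coe_smul hw]
        simpa [hwc] using ih
      rw [integrable_const_iff] at this
      simpa using this
    have hρ : charFun ρ = fun t => (-1) ^ n * (deriv^[2 * n] (charFun μ)) t := by
      ext t
      rw [← iteratedDeriv_eq_iterate, iteratedDeriv_charFun (memLp_of_even_aux μ n ih), charFun_apply_real,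
        integral_withDensity_eq_integral_smul hw, pow_mul, I_sq, ← mul_assoc, ← mul_pow]
      simp only [mul_neg, mul_one, neg_neg, one_pow, one_mul]
      congr with x
      rw [NNReal.smul_def, hwc, Complex.real_smul]
      push_cast; rfl
    have hA : AnalyticAt ℝ (charFun ρ) 0 := by
      rw [hρ]
      exact analyticAt_const.mul (h.iterated_deriv (2 * n))
    have := sq_integrable_aux ρ hA
    rw [integrable_withDensity_iff_integrable_coe_smul hw] at this
    refine this.congr (ae_of_all _ fun x => ?_)
    simp only [hwc, smul_eq_mul]
    ring

lemma cosh_integrable_aux (μ : Measure ℝ) [IsFiniteMeasure μ] (h : AnalyticAt ℝ (charFun μ) 0) :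
    ∃ r : ℝ, 0 < r ∧ Integrable (fun x : ℝ => Real.cosh (r * x)) μ := by
  have hm := even_moment_aux μ h
  obtain ⟨p, R, hp⟩ := h
  obtain ⟨r, hr0, hr⟩ := ENNReal.lt_iff_exists_nnreal_btwn.1 (hp.r_pos.trans_le hp.r_le)
  have hr0' : (0 : ℝ) < r := by exact_mod_cast hr0
  have hs := p.summable_norm_mul_pow hr
  refine ⟨r, hr0', ?_⟩
  have hbound : ∀ n : ℕ, ∫ x, (r * x : ℝ) ^ (2 * n) / ((2 * n).factorial : ℝ) ∂μ
      ≤ ‖p (2 * n)‖ * (r : ℝ) ^ (2 * n) := by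
    intro n
    have h1 := iteratedDeriv_charFun_zero (memLp_of_even_aux μ n (hm n))
    have h2 := hp.factorial_smul (1 : ℝ) (2 * n)
    rw [← iteratedDeriv_eq_iteratedFDeriv, h1] at h2
    have h3 : ‖I ^ (2 * n) * ((∫ x, x ^ (2 * n) ∂μ : ℝ) : ℂ)‖ = ∫ x, x ^ (2 * n) ∂μ := by
      rw [norm_mul, norm_pow, norm_I, one_pow, one_mul, Complex.norm_real, Real.norm_eq_abs, abs_of_nonneg]
      exact integral_nonneg fun x => by simp only [pow_mul, Pi.zero_apply]; positivity
    have h4 : ∫ x, x ^ (2 * n) ∂μ ≤ ((2 * n).factorial : ℝ) * ‖p (2 * n)‖ := by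
      rw [← h3, ← h2, nsmul_eq_mul, norm_mul, Complex.norm_natCast]
      gcongr
      simpa using (p (2 * n)).le_opNorm (fun _ => (1 : ℝ))
    have h5 : ∀ x : ℝ, (r * x : ℝ) ^ (2 * n) / ((2 * n).factorial : ℝ)
        = ((r : ℝ) ^ (2 * n) / ((2 * n).factorial : ℝ)) * x ^ (2 * n) := fun x => by
      rw [mul_pow]; ring
    simp_rw [h5]
    rw [integral_const_mul, div_mul_eq_mul_div, div_le_iff₀ (by positivity)]
    calc _ ≤ (r : ℝ) ^ (2 * n) * (((2 * n).factorial : ℝ) * ‖p (2 * n)‖) := by gcongr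
      _ = _ := by ring
  have hti : ∀ n : ℕ, Integrable (fun x : ℝ => (r * x : ℝ) ^ (2 * n) / ((2 * n).factorial : ℝ)) μ := by
    intro n
    simp_rw [mul_pow]
    exact ((hm n).const_mul _).div_const _
  have hnn : ∀ (n : ℕ) (x : ℝ), 0 ≤ (r * x : ℝ) ^ (2 * n) / ((2 * n).factorial : ℝ) := fun n x => by
    rw [pow_mul]; positivity
  have hs2 : Summable (fun n : ℕ => ‖p (2 * n)‖ * (r : ℝ) ^ (2 * n)) :=
    hs.comp_injective (i := fun n => 2 * n) (fun a b hab => by simpa using hab)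
  refine ⟨by fun_prop, ?_⟩
  rw [hasFiniteIntegral_iff_ofReal (ae_of_all _ fun x => (Real.cosh_pos _).le)]
  have e : ∀ x : ℝ, ENNReal.ofReal (Real.cosh (r * x))
      = ∑' n : ℕ, ENNReal.ofReal ((r * x : ℝ) ^ (2 * n) / ((2 * n).factorial : ℝ)) := fun x => by
    rw [Real.cosh_eq_tsum, ENNReal.ofReal_tsum_of_nonneg (fun n => hnn n x) (Real.hasSum_cosh _).summable]
  simp_rw [e]
  rw [lintegral_tsum (fun n => by fun_prop)]
  calc _ ≤ ∑' n : ℕ, ENNReal.ofReal (‖p (2 * n)‖ * (r : ℝ) ^ (2 * n)) := by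
        refine ENNReal.tsum_le_tsum fun n => ?_
        rw [← ofReal_integral_eq_lintegral_ofReal (hti n) (ae_of_all _ (hnn n))]
        exact ENNReal.ofReal_le_ofReal (hbound n)
    _ = ENNReal.ofReal (∑' n : ℕ, ‖p (2 * n)‖ * (r : ℝ) ^ (2 * n)) :=
        (ENNReal.ofReal_tsum_of_nonneg (fun n => by positivity) hs2).symm
    _ < ⊤ := ENNReal.ofReal_lt_top

lemma charFun_analytic_aux (μ : Measure ℝ) [IsFiniteMeasure μ] (h : AnalyticAt ℝ (charFun μ) 0) :
    AnalyticOnNhd ℝ (charFun μ) Set.univ := by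
  obtain ⟨r, hr, hc⟩ := cosh_integrable_aux μ h
  have hsub : Set.Ioo (-r) r ⊆ integrableExpSet id μ := by
    intro s hs
    refine Integrable.mono' (hc.const_mul 2) (by fun_prop) (ae_of_all _ fun x => ?_)
    rw [Real.norm_eq_abs, Real.abs_exp, Real.cosh_eq, id]
    have hsx : s * x ≤ r * |x| :=
      (le_abs_self _).trans (by rw [abs_mul]; gcongr; exact (abs_lt.2 hs).le)
    have := Real.exp_le_exp.2 hsx
    have p1 := Real.exp_pos (r * x)
    have p2 := Real.exp_pos (-(r * x))
    rcases abs_choice x with hx | hx <;> rw [hx] at this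
    · linarith
    · rw [mul_neg] at this; linarith
  have h0 : (0 : ℝ) ∈ interior (integrableExpSet id μ) :=
    interior_mono hsub (by rw [isOpen_Ioo.interior_eq]; exact ⟨by linarith, hr⟩)
  intro t _
  have e : charFun μ = fun t : ℝ => complexMGF id μ (t * I) := by
    ext t; rw [complexMGF_id_mul_I]
  rw [e]
  have h1 : AnalyticAt ℂ (complexMGF id μ) ((t : ℂ) * I) := analyticAt_complexMGF (by simpa using h0)
  have h2 : AnalyticAt ℝ (fun t : ℝ => (t : ℂ) * I) t :=
    (Complex.ofRealCLM.analyticAt t).mul analyticAt_const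
  exact AnalyticAt.comp (g := complexMGF id μ) (f := fun t : ℝ => (t : ℂ) * I) h1.restrictScalars h2

theorem stmt_4 (a : ℝ) (ha : 0 < a) (F : ℝ → ℂ)
    (hF : AnalyticAt ℝ F 0)
    (μ ν : Measure ℝ) [IsFiniteMeasure μ] [IsFiniteMeasure ν]
    (hμ : ∀ x ∈ Set.Ioo (-a) a,
      (∫ l, Complex.exp (Complex.I * (l : ℂ) * (x : ℂ)) ∂μ) = F x)
    (hν : ∀ x ∈ Set.Ioo (-a) a,
      (∫ l, Complex.exp (Complex.I * (l : ℂ) * (x : ℂ)) ∂ν) = F x) :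
    μ = ν := by
  have hmem : Set.Ioo (-a) a ∈ 𝓝 (0 : ℝ) := Ioo_mem_nhds (by linarith) ha
  have key : ∀ ρ : Measure ℝ, (∀ x ∈ Set.Ioo (-a) a,
      (∫ l, Complex.exp (Complex.I * (l : ℂ) * (x : ℂ)) ∂ρ) = F x) → F =ᶠ[𝓝 0] charFun ρ := by
    intro ρ hρ
    filter_upwards [hmem] with x hx
    rw [← hρ x hx, charFun_apply_real]
    congr with l
    ring_nf
  have k1 := key μ hμ
  have k2 := key ν hν
  exact Measure.ext_of_charFun ((charFun_analytic_aux μ (hF.congr k1)).eq_of_eventuallyEq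
    (charFun_analytic_aux ν (hF.congr k2)) (k1.symm.trans k2))
end
end

section
/- (Carleman) Let μ and ν be positive Borel measures on ℝ such that t ↦ |t|ⁿ is μ-integrable and ν-integrable for every n ∈ ℕ, and suppose the moments agree: mₙ := ∫_ℝ tⁿ dμ(t) = ∫_ℝ tⁿ dν(t) for all n ≥ 0. If the series ∑_{k=1}^∞ m_{2k}^{−1/(2k)} diverges (the Carleman condition), then μ = ν. -/
open MeasureTheory

noncomputable section

open Finset in
lemma exp_rem (z : ℂ) (hz : z.re = 0) (m : ℕ) : ∀ s : ℝ, 0 ≤ s →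
    ‖Complex.exp (z * s) - ∑ j ∈ range m, (z * s) ^ j / (j.factorial : ℂ)‖
      ≤ ‖z‖ ^ m * s ^ m / (m.factorial : ℝ) := by
  induction m with
  | zero =>
    intro s hs
    simp [Complex.norm_exp, hz]
  | succ m ih =>
    intro s hs
    have key := image_norm_le_of_norm_deriv_right_le_deriv_boundary (a := 0) (b := s)
      (f := fun s : ℝ => Complex.exp (z * s) -
        ∑ j ∈ range (m + 1), (z * s) ^ j / (j.factorial : ℂ))
      (f' := fun s : ℝ => z * (Complex.exp (z * s) -
        ∑ j ∈ range m, (z * s) ^ j / (j.factorial : ℂ)))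
      (B := fun s : ℝ => ‖z‖ ^ (m + 1) * s ^ (m + 1) / ((m + 1).factorial : ℝ))
      (B' := fun s : ℝ => ‖z‖ ^ (m + 1) * s ^ m / (m.factorial : ℝ))
      (by fun_prop) ?_ ?_ ?_ ?_ (x := s) ⟨hs, le_rfl⟩
    · exact key
    · intro x _
      apply HasDerivAt.hasDerivWithinAt
      have h1 : HasDerivAt (fun s : ℝ => z * (s : ℂ)) z x := by
        simpa using (Complex.ofRealCLM.hasDerivAt (x := x)).const_mul z
      have h2 : HasDerivAt (fun s : ℝ => ∑ j ∈ range (m + 1), (z * s) ^ j / (j.factorial : ℂ))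
          (∑ j ∈ range (m + 1), ((j : ℂ) * (z * x) ^ (j - 1) * z) / (j.factorial : ℂ)) x := by
        apply HasDerivAt.fun_sum
        intro j _
        exact (h1.pow j).div_const _
      refine (h1.cexp.sub h2).congr_deriv ?_
      rw [sum_range_succ']
      simp only [mul_sub, mul_sum]
      rw [mul_comm z (Complex.exp _)]
      congr 1
      simp only [Nat.cast_zero, zero_mul, zero_div, add_zero]
      refine sum_congr rfl fun j _ => ?_
      rw [Nat.factorial_succ]
      have : (j.factorial : ℂ) ≠ 0 := by exact_mod_cast j.factorial_ne_zero
      have h3 : ((j : ℂ) + 1) ≠ 0 := by exact_mod_cast j.succ_ne_zero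
      push_cast
      field_simp
    · simp [sum_range_succ']
    · intro x
      have := ((hasDerivAt_pow (m + 1) x).const_mul (‖z‖ ^ (m + 1))).div_const
        ((m + 1).factorial : ℝ)
      refine this.congr_deriv ?_
      rw [Nat.factorial_succ]
      have : (m.factorial : ℝ) ≠ 0 := by exact_mod_cast m.factorial_ne_zero
      have h3 : ((m : ℝ) + 1) ≠ 0 := by exact_mod_cast m.succ_ne_zero
      push_cast
      field_simp
    · intro x hx
      rw [norm_mul]
      calc _ ≤ ‖z‖ * (‖z‖ ^ m * x ^ m / (m.factorial : ℝ)) := by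
            gcongr
            exact ih x hx.1
        _ = _ := by ring

/-- derivative of the characteristic function -/
def FF (μ : Measure ℝ) (n : ℕ) (x : ℝ) : ℂ :=
  ∫ t : ℝ, (Complex.I * t) ^ n * Complex.exp (Complex.I * t * x) ∂μ

lemma FF_int (μ : Measure ℝ) (hμint : ∀ n : ℕ, Integrable (fun t : ℝ => |t| ^ n) μ)
    (n : ℕ) (x : ℝ) :
    Integrable (fun t : ℝ => (Complex.I * t) ^ n * Complex.exp (Complex.I * t * x)) μ := by
  refine (hμint n).mono' (by fun_prop) (Filter.Eventually.of_forall fun t => ?_)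
  simp [Complex.norm_exp]

lemma FF_bound (μ : Measure ℝ) (n : ℕ) (x : ℝ) : ‖FF μ n x‖ ≤ ∫ t, |t| ^ n ∂μ := by
  refine (norm_integral_le_integral_norm _).trans (le_of_eq ?_)
  congr 1
  ext t
  simp [Complex.norm_exp]

open Finset in
lemma FF_taylor (μ : Measure ℝ) (hμint : ∀ n : ℕ, Integrable (fun t : ℝ => |t| ^ n) μ)
    (n m : ℕ) (x h : ℝ) :
    ‖FF μ n (x + h) - ∑ j ∈ range m, (h : ℂ) ^ j / (j.factorial : ℂ) * FF μ (n + j) x‖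
      ≤ |h| ^ m / (m.factorial : ℝ) * ∫ t, |t| ^ (n + m) ∂μ := by
  unfold FF
  simp_rw [← integral_const_mul]
  rw [← integral_finsetSum _ (fun j _ => (FF_int μ hμint (n + j) x).const_mul _),
    ← integral_sub (FF_int μ hμint _ _)
      (integrable_finsetSum _ (fun j _ => (FF_int μ hμint (n + j) x).const_mul _))]
  refine norm_integral_le_of_norm_le ((hμint (n + m)).const_mul _)
    (Filter.Eventually.of_forall fun t => ?_)
  have e : (Complex.I * t) ^ n * Complex.exp (Complex.I * t * ((x + h : ℝ) : ℂ)) -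
      ∑ j ∈ range m, (h : ℂ) ^ j / (j.factorial : ℂ) *
        ((Complex.I * t) ^ (n + j) * Complex.exp (Complex.I * t * x)) =
      ((Complex.I * t) ^ n * Complex.exp (Complex.I * t * x)) *
      (Complex.exp ((Complex.I * t * h) * (1 : ℝ)) -
        ∑ j ∈ range m, ((Complex.I * t * h) * (1 : ℝ)) ^ j / (j.factorial : ℂ)) := by
    rw [mul_sub, mul_sum]
    congr 1
    · rw [mul_assoc ((Complex.I * (t : ℂ)) ^ n), ← Complex.exp_add]
      congr 2
      push_cast
      ring
    · refine sum_congr rfl fun j _ => ?_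
      push_cast
      ring
  rw [e, norm_mul]
  have := exp_rem (Complex.I * t * h) (by simp) m 1 zero_le_one
  have hn : ‖(Complex.I * t) ^ n * Complex.exp (Complex.I * t * x)‖ = |t| ^ n := by
    simp [Complex.norm_exp]
  rw [hn]
  calc _ ≤ |t| ^ n * (‖Complex.I * (t : ℂ) * h‖ ^ m * 1 ^ m / (m.factorial : ℝ)) := by
        gcongr
    _ = _ := by simp; ring

open Finset in
/-- Bang step -/
lemma bang_step (F : ℕ → ℝ → ℂ) (M : ℕ → ℝ) (hM : ∀ n, 0 < M n)
    (hr : Monotone fun n => M (n + 1) / M n)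
    (hF : ∀ n x, ‖F n x‖ ≤ M n)
    (hT : ∀ n m x h, ‖F n (x + h) - ∑ j ∈ range m, (h : ℂ) ^ j / (j.factorial : ℂ) * F (n + j) x‖
      ≤ |h| ^ m / (m.factorial : ℝ) * M (n + m))
    (N : ℕ) (x h : ℝ) (hh : |h| ≤ Real.exp (-1) * (M N / M (N + 1)))
    (hP : ∀ n, ‖F n x‖ ≤ M n * Real.exp ((n : ℝ) - (N + 1 : ℕ))) :
    ∀ n, ‖F n (x + h)‖ ≤ M n * Real.exp ((n : ℝ) - N) := by
  intro n
  rcases le_total N n with hn | hn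
  · refine (hF n _).trans (le_mul_of_one_le_right (hM n).le (Real.one_le_exp ?_))
    have : (N : ℝ) ≤ n := by exact_mod_cast hn
    linarith
  obtain ⟨d, rfl⟩ := Nat.exists_eq_add_of_le hn
  set r := M (n + d + 1) / M (n + d) with hrdef
  have hr0 : 0 < r := div_pos (hM _) (hM _)
  have hMj : ∀ j, j ≤ d + 1 → M (n + j) ≤ M n * r ^ j := by
    intro j
    induction j with
    | zero => simp
    | succ j ih =>
      intro hj
      have h1 := ih (by omega)
      have h2 : M (n + j + 1) / M (n + j) ≤ r := hr (by omega : n + j ≤ n + d)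
      rw [div_le_iff₀ (hM _)] at h2
      calc M (n + (j + 1)) ≤ r * M (n + j) := h2
        _ ≤ r * (M n * r ^ j) := by gcongr
        _ = _ := by ring
  set u := |h| * r * Real.exp 1 with hu
  have hu0 : 0 ≤ u := by positivity
  have hu1 : u ≤ 1 := by
    calc u ≤ (Real.exp (-1) * (M (n + d) / M (n + d + 1))) * r * Real.exp 1 := by
          rw [hu]; gcongr
      _ = (Real.exp (-1) * Real.exp 1) * ((M (n + d) / M (n + d + 1)) * r) := by ring
      _ = 1 := by
        rw [← Real.exp_add, hrdef]
        have := (hM (n + d)).ne'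
        have := (hM (n + d + 1)).ne'
        field_simp
        simp
  set E := Real.exp ((n : ℝ) - (n + d + 1 : ℕ)) with hE
  have hterm : ∀ j, Real.exp (((n + j : ℕ) : ℝ) - (n + d + 1 : ℕ)) = E * Real.exp 1 ^ j := by
    intro j
    rw [hE, ← Real.exp_nat_mul, ← Real.exp_add]
    congr 1
    push_cast
    ring
  have hsum : ‖∑ j ∈ range (d + 1), (h : ℂ) ^ j / (j.factorial : ℂ) * F (n + j) x‖
      ≤ ∑ j ∈ range (d + 1), M n * E * (u ^ j / (j.factorial : ℝ)) := by
    refine (norm_sum_le _ _).trans (sum_le_sum fun j hj => ?_)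
    have hj' : j ≤ d + 1 := (mem_range.1 hj).le
    calc _ = |h| ^ j / (j.factorial : ℝ) * ‖F (n + j) x‖ := by simp
      _ ≤ |h| ^ j / (j.factorial : ℝ) * ((M n * r ^ j) * (E * Real.exp 1 ^ j)) := by
        gcongr
        refine (hP (n + j)).trans ?_
        rw [hterm]
        gcongr
        exact hMj j hj'
      _ = _ := by rw [hu]; ring
  have hrem := hT n (d + 1) x h
  have hrem2 : |h| ^ (d + 1) / ((d + 1).factorial : ℝ) * M (n + (d + 1)) ≤
      M n * E * (u ^ (d + 1) / ((d + 1).factorial : ℝ)) := by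
    have hE1 : E * Real.exp 1 ^ (d + 1) = 1 := by
      rw [← hterm]; simp [add_assoc]
    calc _ ≤ |h| ^ (d + 1) / ((d + 1).factorial : ℝ) * (M n * r ^ (d + 1)) := by
          gcongr
          exact hMj _ le_rfl
      _ = |h| ^ (d + 1) / ((d + 1).factorial : ℝ) * (M n * r ^ (d + 1))
            * (E * Real.exp 1 ^ (d + 1)) := by rw [hE1, mul_one]
      _ = _ := by rw [hu]; ring
  calc ‖F n (x + h)‖ ≤ _ := norm_le_norm_add_norm_sub
        (∑ j ∈ range (d + 1), (h : ℂ) ^ j / (j.factorial : ℂ) * F (n + j) x) _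
    _ ≤ ∑ j ∈ range (d + 1), M n * E * (u ^ j / (j.factorial : ℝ)) +
        M n * E * (u ^ (d + 1) / ((d + 1).factorial : ℝ)) := by
        refine add_le_add hsum ?_
        first
          | exact hrem.trans hrem2
          | (rw [norm_sub_rev]; exact hrem.trans hrem2)
    _ = M n * E * ∑ j ∈ range (d + 1 + 1), (u ^ j / (j.factorial : ℝ)) := by
        rw [sum_range_succ _ (d + 1), mul_add, mul_sum]
    _ ≤ M n * E * Real.exp 1 := by
        have := hM n
        gcongr
        exact (Real.sum_le_exp_of_nonneg hu0 _).trans (Real.exp_le_exp.2 hu1)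
    _ = _ := by
        rw [mul_assoc, hE, ← Real.exp_add]
        congr 2
        push_cast
        ring

open Finset in
lemma bang (F : ℕ → ℝ → ℂ) (M : ℕ → ℝ) (hM : ∀ n, 0 < M n)
    (hr : Monotone fun n => M (n + 1) / M n)
    (hF : ∀ n x, ‖F n x‖ ≤ M n)
    (hT : ∀ n m x h, ‖F n (x + h) - ∑ j ∈ range m, (h : ℂ) ^ j / (j.factorial : ℂ) * F (n + j) x‖
      ≤ |h| ^ m / (m.factorial : ℝ) * M (n + m))
    (h0 : ∀ n, F n 0 = 0)
    (hdiv : ¬ Summable fun n => M n / M (n + 1)) (x : ℝ) : F 0 x = 0 := by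
  set b : ℕ → ℝ := fun n => Real.exp (-1) * (M n / M (n + 1)) with hb
  have hbpos : ∀ n, 0 < b n := fun n => mul_pos (Real.exp_pos _) (div_pos (hM _) (hM _))
  have main : ∀ d k x, |x| ≤ ∑ i ∈ range d, b (i + k) →
      ∀ n, ‖F n x‖ ≤ M n * Real.exp ((n : ℝ) - k) := by
    intro d
    induction d with
    | zero =>
      intro k x hx n
      have : x = 0 := by simpa using hx
      rw [this, h0]
      have := hM n
      simp
      positivity
    | succ d ih =>
      intro k x hx
      rw [sum_range_succ'] at hx
      set S := ∑ i ∈ range d, b (i + 1 + k) with hS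
      have hS0 : 0 ≤ S := sum_nonneg fun i _ => (hbpos _).le
      rw [zero_add] at hx
      have hbk := hbpos k
      have hSb : 0 < S + b k := by linarith
      have hx1 : |x| / (S + b k) ≤ 1 := (div_le_one hSb).2 hx
      have hy := ih (k + 1) (x * (S / (S + b k))) (by
        rw [abs_mul, abs_of_nonneg (by positivity : 0 ≤ S / (S + b k))]
        calc |x| * (S / (S + b k)) = |x| / (S + b k) * S := by ring
          _ ≤ 1 * S := by gcongr
          _ = ∑ i ∈ range d, b (i + (k + 1)) := by
            rw [one_mul, hS]
            refine sum_congr rfl fun i _ => ?_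
            congr 1
            ring)
      have := bang_step F M hM hr hF hT k (x * (S / (S + b k))) (x * (b k / (S + b k))) (by
        rw [abs_mul, abs_of_nonneg (by positivity : 0 ≤ b k / (S + b k))]
        calc |x| * (b k / (S + b k)) = |x| / (S + b k) * b k := by ring
          _ ≤ 1 * b k := by gcongr
          _ = _ := by rw [one_mul]) hy
      have e : x * (S / (S + b k)) + x * (b k / (S + b k)) = x := by
        field_simp
      rwa [e] at this
  have hbdiv : ¬ Summable b := by
    rw [hb, summable_mul_left_iff (Real.exp_pos _).ne']
    exact hdiv
  have hall : ∀ k : ℕ, ‖F 0 x‖ ≤ M 0 * Real.exp (-(k : ℝ)) := by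
    intro k
    have h1 : ¬ Summable fun i => b (i + k) := by rwa [summable_nat_add_iff]
    rw [not_summable_iff_tendsto_nat_atTop_of_nonneg (fun i => (hbpos _).le)] at h1
    obtain ⟨d, hd⟩ := (h1.eventually_ge_atTop |x|).exists
    simpa using main d k x hd 0
  have hlim : Filter.Tendsto (fun k : ℕ => M 0 * Real.exp (-(k : ℝ))) Filter.atTop (nhds (M 0 * 0)) :=
    (Real.tendsto_exp_neg_atTop_nhds_zero.comp tendsto_natCast_atTop_atTop).const_mul _
  have := ge_of_tendsto' hlim hall
  rw [mul_zero] at this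
  exact norm_le_zero_iff.1 this

open Finset in
/-- Carleman inequality (with a non-sharp constant) -/
lemma carleman_ineq (a : ℕ → ℝ) (ha : ∀ n, 0 ≤ a n) (hs : Summable a) :
    Summable fun n : ℕ => (∏ i ∈ range (n + 1), a i) ^ ((1 : ℝ) / ((n + 1 : ℕ) : ℝ)) := by
  set T : ℕ → ℝ := fun n => ∑ i ∈ range n, ((i : ℝ) + 1) * a i with hT
  have hT0 : ∀ n, 0 ≤ T n := fun n => sum_nonneg fun i _ => mul_nonneg (by positivity) (ha i)
  have htel : ∀ N, ∑ n ∈ range N, T (n + 1) / (((n : ℝ) + 1) * (n + 2)) =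
      ∑ i ∈ range N, a i - T N / (N + 1) := by
    intro N
    induction N with
    | zero => simp [hT]
    | succ N ih =>
      have : T (N + 1) = T N + (N + 1) * a N := sum_range_succ _ _
      rw [sum_range_succ, ih, sum_range_succ, this]
      push_cast
      field_simp
      ring
  have hs1 : Summable fun n : ℕ => T (n + 1) / (((n : ℝ) + 1) * (n + 2)) := by
    refine summable_of_sum_range_le (c := ∑' i, a i)
      (fun n => div_nonneg (hT0 _) (by positivity)) fun N => ?_
    rw [htel]
    have h1 := hs.sum_le_tsum (range N) (fun i _ => ha i)
    have h2 : 0 ≤ T N / (N + 1) := div_nonneg (hT0 _) (by positivity)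
    linarith
  refine Summable.of_nonneg_of_le
    (fun n => Real.rpow_nonneg (prod_nonneg fun i _ => ha i) _) (fun n => ?_)
    (hs1.mul_left (2 * Real.exp 1))
  set p : ℝ := ((n + 1 : ℕ) : ℝ) with hp
  have hp0 : 0 < p := by positivity
  have hP0 : 0 ≤ ∏ i ∈ range (n + 1), a i := prod_nonneg fun i _ => ha i
  have amgm := Real.geom_mean_le_arith_mean (range (n + 1)) (fun _ => 1)
    (fun i : ℕ => ((i : ℝ) + 1) * a i) (by simp) (by simp; positivity)
    (fun i _ => mul_nonneg (by positivity) (ha i))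
  simp only [Real.rpow_one, one_mul, sum_const, card_range, nsmul_eq_mul, mul_one,
    prod_mul_distrib] at amgm
  rw [← hp] at amgm
  have hfac : ∏ i ∈ range (n + 1), ((i : ℝ) + 1) = ((n + 1).factorial : ℝ) := by
    rw [← prod_range_add_one_eq_factorial]
    push_cast
    rfl
  rw [hfac, Real.mul_rpow (by positivity) hP0] at amgm
  have hst : p / Real.exp 1 ≤ ((n + 1).factorial : ℝ) ^ p⁻¹ := by
    have h1 : p ^ (n + 1) / ((n + 1).factorial : ℝ) ≤ Real.exp p := by
      refine le_trans ?_ (Real.sum_le_exp_of_nonneg hp0.le (n + 2))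
      exact single_le_sum (f := fun i : ℕ => p ^ i / (i.factorial : ℝ))
        (fun i _ => by positivity) (mem_range.2 (by omega))
    rw [Real.le_rpow_inv_iff_of_pos (by positivity) (by positivity) hp0]
    rw [hp, Real.rpow_natCast, ← hp, div_pow, ← Real.exp_nat_mul, mul_one, ← hp]
    rw [div_le_iff₀ (by positivity)] at h1 ⊢
    linarith
  rw [one_div]
  set G := (∏ i ∈ range (n + 1), a i) ^ p⁻¹ with hG
  have hG0 : 0 ≤ G := Real.rpow_nonneg hP0 _
  have h2 : p / Real.exp 1 * G ≤ T (n + 1) / p :=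
    (mul_le_mul_of_nonneg_right hst hG0).trans amgm
  have h3 : G ≤ Real.exp 1 * (T (n + 1) / (p * p)) := by
    have : G = Real.exp 1 / p * (p / Real.exp 1 * G) := by field_simp
    rw [this]
    calc _ ≤ Real.exp 1 / p * (T (n + 1) / p) := by gcongr
      _ = _ := by field_simp
  refine h3.trans ?_
  have hpn : p = n + 1 := by rw [hp]; push_cast; rfl
  have h4 : T (n + 1) / (p * p) ≤ 2 * (T (n + 1) / (((n : ℝ) + 1) * (n + 2))) := by
    rw [hpn, ← mul_div_assoc, div_le_div_iff₀ (by positivity) (by positivity)]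
    have := hT0 (n + 1)
    have hn : (0 : ℝ) ≤ n := by positivity
    have : ((n : ℝ) + 1) * (n + 2) ≤ 2 * ((n + 1) * (n + 1)) := by nlinarith
    nlinarith
  calc _ ≤ Real.exp 1 * (2 * (T (n + 1) / (((n : ℝ) + 1) * (n + 2)))) := by gcongr
    _ = _ := by ring

open Finset in
theorem stmt_5 (μ ν : Measure ℝ)
    (hμint : ∀ n : ℕ, Integrable (fun t : ℝ => |t| ^ n) μ)
    (hνint : ∀ n : ℕ, Integrable (fun t : ℝ => |t| ^ n) ν)
    (hmom : ∀ n : ℕ, (∫ t, t ^ n ∂μ) = ∫ t, t ^ n ∂ν)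
    (hCarleman : ¬ Summable (fun k : ℕ =>
      (∫ t, t ^ (2 * (k + 1)) ∂μ) ^ (-(1 : ℝ) / (2 * (k + 1) : ℝ)))) :
    μ = ν := by
  have : IsFiniteMeasure μ := by
    have := hμint 0
    simp only [pow_zero] at this
    exact (integrable_const_iff_isFiniteMeasure one_ne_zero).1 this
  have : IsFiniteMeasure ν := by
    have := hνint 0
    simp only [pow_zero] at this
    exact (integrable_const_iff_isFiniteMeasure one_ne_zero).1 this
  set A : ℕ → ℝ := fun n => ∫ t, |t| ^ n ∂μ with hA
  set B : ℕ → ℝ := fun n => ∫ t, |t| ^ n ∂ν with hB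
  set M : ℕ → ℝ := fun n => A n + B n with hMdef
  have hA0 : ∀ n, 0 ≤ A n := fun n => integral_nonneg fun t => by positivity
  have hB0 : ∀ n, 0 ≤ B n := fun n => integral_nonneg fun t => by positivity
  have hne : ¬ (∀ᵐ t ∂μ, t = 0) := by
    intro h
    apply hCarleman
    convert summable_zero with k
    have : ∫ t, t ^ (2 * (k + 1)) ∂μ = 0 := by
      rw [integral_eq_zero_of_ae]
      filter_upwards [h] with t ht
      simp [ht]
    rw [this, Real.zero_rpow]
    have : (2 * ((k : ℝ) + 1)) ≠ 0 := by positivity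
    simp only [ne_eq, div_eq_zero_iff, not_or]
    exact ⟨by norm_num, this⟩
  have hApos : ∀ n, 0 < A n := by
    intro n
    refine lt_of_le_of_ne (hA0 n) fun h => hne ?_
    have h1 := (integral_eq_zero_iff_of_nonneg (fun t => by positivity) (hμint n)).1 h.symm
    filter_upwards [h1] with t ht
    have : |t| ^ n = 0 := ht
    exact abs_eq_zero.1 (eq_zero_of_pow_eq_zero this)
  have hM : ∀ n, 0 < M n := fun n => add_pos_of_pos_of_nonneg (hApos n) (hB0 n)
  have hquad : ∀ (ρ : Measure ℝ), (∀ n : ℕ, Integrable (fun t : ℝ => |t| ^ n) ρ) → ∀ n (c : ℝ),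
      0 ≤ (∫ t, |t| ^ (n + 2) ∂ρ) - 2 * c * (∫ t, |t| ^ (n + 1) ∂ρ)
        + c ^ 2 * ∫ t, |t| ^ n ∂ρ := by
    intro ρ hρ n c
    have hsub : Integrable (fun t : ℝ => |t| ^ (n + 2) - 2 * c * |t| ^ (n + 1)) ρ :=
      (hρ _).sub ((hρ _).const_mul _)
    rw [← integral_const_mul, ← integral_const_mul,
      ← integral_sub (hρ _) ((hρ _).const_mul _),
      ← integral_add hsub ((hρ _).const_mul _)]
    refine integral_nonneg fun t => ?_
    have : |t| ^ (n + 2) - 2 * c * |t| ^ (n + 1) + c ^ 2 * |t| ^ n = |t| ^ n * (|t| - c) ^ 2 := by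
      ring
    show 0 ≤ |t| ^ (n + 2) - 2 * c * |t| ^ (n + 1) + c ^ 2 * |t| ^ n
    rw [this]
    positivity
  have hr : Monotone fun n => M (n + 1) / M n := by
    refine monotone_nat_of_le_succ fun n => ?_
    have h1 := hquad μ hμint n (M (n + 1) / M n)
    have h2 := hquad ν hνint n (M (n + 1) / M n)
    set c := M (n + 1) / M n with hc
    have h3 : 0 ≤ M (n + 2) - 2 * c * M (n + 1) + c ^ 2 * M n := by
      simp only [hMdef, hA, hB]
      linarith
    have h4 : M (n + 1) = c * M n := by
      rw [hc]; field_simp [(hM n).ne']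
    rw [le_div_iff₀ (hM _)]
    show c * M (n + 1) ≤ M (n + 2)
    have h5 : c ^ 2 * M n = c * M (n + 1) := by rw [h4]; ring
    linarith
  set F : ℕ → ℝ → ℂ := fun n x => FF μ n x - FF ν n x with hF
  have hz : ∀ x, F 0 x = 0 := by
    refine bang F M hM hr ?_ ?_ ?_ ?_
    · intro n x
      exact (norm_sub_le _ _).trans (add_le_add (FF_bound μ n x) (FF_bound ν n x))
    · intro n m x h
      have h1 := FF_taylor μ hμint n m x h
      have h2 := FF_taylor ν hνint n m x h
      have e : F n (x + h) - ∑ j ∈ range m, (h : ℂ) ^ j / (j.factorial : ℂ) * F (n + j) x =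
        (FF μ n (x + h) - ∑ j ∈ range m, (h : ℂ) ^ j / (j.factorial : ℂ) * FF μ (n + j) x) -
        (FF ν n (x + h) - ∑ j ∈ range m, (h : ℂ) ^ j / (j.factorial : ℂ) * FF ν (n + j) x) := by
        simp only [hF, mul_sub, sum_sub_distrib]
        ring
      rw [e]
      refine (norm_sub_le _ _).trans ((add_le_add h1 h2).trans (le_of_eq ?_))
      simp only [hMdef, hA, hB]
      ring
    · intro n
      have h1 : ∀ ρ : Measure ℝ, FF ρ n 0 = Complex.I ^ n * ((∫ t, t ^ n ∂ρ : ℝ) : ℂ) := by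
        intro ρ
        unfold FF
        rw [← integral_complex_ofReal, ← integral_const_mul]
        congr 1
        ext t
        simp [mul_pow]
      simp only [hF]
      rw [h1, h1, hmom, sub_self]
    · intro hs
      apply hCarleman
      have hc := carleman_ineq _ (fun n => (div_pos (hM n) (hM (n + 1))).le) hs
      have hprod : ∀ n, ∏ i ∈ range n, M i / M (i + 1) = M 0 / M n := by
        intro n
        induction n with
        | zero => simp [(hM 0).ne']
        | succ n ih =>
          rw [prod_range_succ, ih]
          have := (hM n).ne'
          field_simp
      simp only [hprod] at hc
      have hinj : Function.Injective (fun k : ℕ => 2 * k + 1) := fun a b h => by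
        simp only at h
        omega
      have hc2 := (hc.comp_injective hinj).mul_left (max 1 (2 / M 0))
      refine Summable.of_nonneg_of_le (fun k => Real.rpow_nonneg
        (integral_nonneg fun t => (even_two_mul _).pow_nonneg t) _) (fun k => ?_) hc2
      simp only [Function.comp]
      have hev : ∀ t : ℝ, |t| ^ (2 * (k + 1)) = t ^ (2 * (k + 1)) := fun t =>
        (even_two_mul _).pow_abs t
      have hm1 : A (2 * (k + 1)) = ∫ t, t ^ (2 * (k + 1)) ∂μ := by simp only [hA, hev]
      have hm2 : B (2 * (k + 1)) = ∫ t, t ^ (2 * (k + 1)) ∂μ := by simp only [hB, hev, hmom]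
      have hidx : 2 * k + 1 + 1 = 2 * (k + 1) := by ring
      rw [← hm1, hidx]
      have hMA : M (2 * (k + 1)) = 2 * A (2 * (k + 1)) := by
        simp only [hMdef]; rw [hm2, ← hm1]; ring
      rw [hMA]
      have ha := hApos (2 * (k + 1))
      set a := A (2 * (k + 1)) with haa
      have hq : (-(1 : ℝ) / (2 * ((k : ℝ) + 1))) = -(1 / ((2 * (k + 1) : ℕ) : ℝ)) := by
        push_cast; ring
      rw [hq]
      set q : ℝ := 1 / ((2 * (k + 1) : ℕ) : ℝ) with hqd
      have hq0 : 0 ≤ q := by positivity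
      have hq1 : q ≤ 1 := by
        rw [hqd, div_le_one (by positivity)]
        exact_mod_cast (by omega : 1 ≤ 2 * (k + 1))
      have hM0 := hM 0
      rw [Real.rpow_neg ha.le, ← Real.inv_rpow ha.le]
      have e : a⁻¹ = (2 / M 0) * (M 0 / (2 * a)) := by field_simp
      rw [e, Real.mul_rpow (by positivity) (by positivity)]
      gcongr
      calc (2 / M 0) ^ q ≤ (max 1 (2 / M 0)) ^ q := by gcongr; exact le_max_right _ _
        _ ≤ (max 1 (2 / M 0)) ^ (1 : ℝ) := Real.rpow_le_rpow_of_exponent_le (le_max_left _ _) hq1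
        _ = _ := Real.rpow_one _
  apply Measure.ext_of_charFun
  ext x
  have h1 : ∀ ρ : Measure ℝ, charFun ρ x = FF ρ 0 x := by
    intro ρ
    rw [charFun_apply_real]
    unfold FF
    congr 1
    ext t
    rw [pow_zero, one_mul]
    congr 1
    ring
  rw [h1, h1]
  exact sub_eq_zero.1 (hz x)
end
end

section
/- (Inversion formula) Let μ be a Borel probability measure on ℝ and let F(x) = ∫_ℝ e^{iλx} dμ(λ) be its Fourier transform. Then for all real numbers a₀ < b₀, the limit as T → ∞ of (1/(2π)) ∫_{−T}^{T} ((e^{−i x a₀} − e^{−i x b₀})/(i x)) · F(x) dx exists and equals μ((a₀, b₀)) + (μ({a₀}) + μ({b₀}))/2. -/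
open MeasureTheory Complex Filter

noncomputable section

def SInt (T : ℝ) : ℝ := ∫ x in (0:ℝ)..T, Real.sinc x

lemma SInt_neg (T : ℝ) : SInt (-T) = - SInt T := by
  unfold SInt
  have h := intervalIntegral.integral_comp_neg (a := 0) (b := T) (fun x => Real.sinc x)
  simp only [Real.sinc_neg, neg_zero] at h
  rw [h, intervalIntegral.integral_symm]

lemma SInt_inner (T y : ℝ) :
    ∫ x in (0:ℝ)..T, Real.sin x * Real.exp (-x * y) =
      (1 + y ^ 2)⁻¹ - Real.exp (-T * y) * (Real.cos T + y * Real.sin T) * (1 + y ^ 2)⁻¹ := by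
  have hy : (1 + y ^ 2) ≠ 0 := by positivity
  have hd : ∀ x ∈ Set.uIcc 0 T, HasDerivAt
      (fun x => - (Real.exp (-x * y) * (Real.cos x + y * Real.sin x) * (1 + y ^ 2)⁻¹))
      (Real.sin x * Real.exp (-x * y)) x := by
    intro x _
    have h1 : HasDerivAt (fun x : ℝ => Real.exp (-x * y)) (Real.exp (-x * y) * (-1 * y)) x :=
      (((hasDerivAt_id x).neg).mul_const y).exp
    have h2 := (Real.hasDerivAt_cos x).add ((Real.hasDerivAt_sin x).const_mul y)
    have h3 := ((h1.mul h2).mul_const ((1 + y ^ 2)⁻¹)).neg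
    refine HasDerivAt.congr_deriv h3 ?_
    simp only [Pi.add_apply]
    field_simp
    ring
  rw [intervalIntegral.integral_eq_sub_of_hasDerivAt hd
    (Continuous.intervalIntegrable (by fun_prop) _ _)]
  simp
  ring

lemma SInt_bound_pos {T : ℝ} (hT : 0 < T) : |SInt T - Real.pi / 2| ≤ 2 / T := by
  have hint : Integrable (Function.uncurry fun x y : ℝ => Real.sin x * Real.exp (-x * y))
      ((volume.restrict (Set.Ioc 0 T)).prod (volume.restrict (Set.Ioi 0))) := by
    rw [integrable_prod_iff (Continuous.aestronglyMeasurable (by fun_prop))]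
    constructor
    · filter_upwards [ae_restrict_mem measurableSet_Ioc] with x hx
      have hneg : -x < 0 := by linarith [hx.1]
      have := (integrableOn_exp_mul_Ioi hneg 0).const_mul (Real.sin x)
      simpa only [Function.uncurry_apply_pair] using this
    · have : IntegrableOn (fun x => |Real.sinc x|) (Set.Ioc 0 T) :=
        (Continuous.integrableOn_Icc (by fun_prop)).mono_set Set.Ioc_subset_Icc_self
      refine this.congr ?_
      filter_upwards [ae_restrict_mem measurableSet_Ioc] with x hx
      simp only [Function.uncurry, norm_mul, Real.norm_eq_abs, Real.abs_exp]
      rw [integral_const_mul, integral_exp_mul_Ioi (by linarith [hx.1] : -x < 0) 0,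
        Real.sinc_of_ne_zero hx.1.ne', abs_div, abs_of_pos hx.1]
      simp [div_eq_mul_inv]
  have hswap := integral_integral_swap hint
  have hL : (∫ x in Set.Ioc 0 T, ∫ y in Set.Ioi (0:ℝ), Real.sin x * Real.exp (-x * y)) = SInt T := by
    unfold SInt
    rw [intervalIntegral.integral_of_le hT.le]
    refine setIntegral_congr_fun measurableSet_Ioc fun x hx => ?_
    rw [integral_const_mul, integral_exp_mul_Ioi (by linarith [hx.1] : -x < 0) 0,
        Real.sinc_of_ne_zero hx.1.ne']
    simp [div_eq_mul_inv]
  have hdom : IntegrableOn (fun y : ℝ => 2 * Real.exp (-T * y)) (Set.Ioi 0) :=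
    (integrableOn_exp_mul_Ioi (by linarith : -T < 0) 0).const_mul _
  have hb : ∀ y ∈ Set.Ioi (0:ℝ), ‖Real.exp (-T * y) * (Real.cos T + y * Real.sin T) * (1 + y ^ 2)⁻¹‖
      ≤ 2 * Real.exp (-T * y) := by
    intro y hy
    have hy : 0 < y := hy
    rw [norm_mul, norm_mul, Real.norm_eq_abs, Real.abs_exp, Real.norm_eq_abs, Real.norm_eq_abs,
      abs_of_pos (by positivity : 0 < (1 + y ^ 2)⁻¹), mul_assoc, mul_comm 2]
    refine mul_le_mul_of_nonneg_left ?_ (Real.exp_pos _).le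
    rw [← div_eq_mul_inv, div_le_iff₀ (by positivity)]
    have h1 : |Real.cos T + y * Real.sin T| ≤ 1 + y := by
      refine (abs_add_le _ _).trans ?_
      rw [abs_mul, abs_of_pos hy]
      nlinarith [Real.abs_cos_le_one T, Real.abs_sin_le_one T]
    nlinarith [sq_nonneg (y - 1)]
  have hi2 : IntegrableOn (fun y : ℝ => Real.exp (-T * y) * (Real.cos T + y * Real.sin T) * (1 + y ^ 2)⁻¹)
      (Set.Ioi 0) := by
    refine Integrable.mono' hdom (Measurable.aestronglyMeasurable (by fun_prop)) ?_
    filter_upwards [ae_restrict_mem measurableSet_Ioi] with y hy using hb y hy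
  have hR : (∫ y in Set.Ioi (0:ℝ), ∫ x in Set.Ioc 0 T, Real.sin x * Real.exp (-x * y)) =
      Real.pi / 2 - ∫ y in Set.Ioi (0:ℝ), Real.exp (-T * y) * (Real.cos T + y * Real.sin T) * (1 + y ^ 2)⁻¹ := by
    simp_rw [← intervalIntegral.integral_of_le hT.le, SInt_inner]
    rw [integral_sub integrable_inv_one_add_sq.integrableOn hi2, integral_Ioi_inv_one_add_sq]
    simp
  rw [hL, hR] at hswap
  rw [hswap, sub_sub_cancel_left, abs_neg]
  rw [← Real.norm_eq_abs]
  refine (norm_integral_le_integral_norm _).trans ?_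
  refine (setIntegral_mono_on hi2.norm hdom measurableSet_Ioi hb).trans ?_
  rw [integral_const_mul, integral_exp_mul_Ioi (by linarith : -T < 0) 0]
  simp [div_eq_mul_inv]

lemma SInt_zero : SInt 0 = 0 := by simp [SInt]

lemma SInt_continuous : Continuous SInt :=
  intervalIntegral.continuous_primitive (fun _ _ => Real.continuous_sinc.intervalIntegrable _ _) 0

lemma SInt_tendsto : Tendsto SInt atTop (nhds (Real.pi / 2)) := by
  rw [tendsto_iff_norm_sub_tendsto_zero]
  refine squeeze_zero' (Eventually.of_forall fun _ => norm_nonneg _) ?_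
    (tendsto_const_nhds (x := (2:ℝ)).div_atTop tendsto_id)
  filter_upwards [eventually_gt_atTop 0] with T hT using SInt_bound_pos hT

lemma SInt_bdd_nonneg {T : ℝ} (hT : 0 ≤ T) : |SInt T| ≤ 6 := by
  rcases le_total T 1 with h | h
  · have := intervalIntegral.norm_integral_le_of_norm_le_const (a := 0) (b := T) (C := 1)
      (f := Real.sinc) (fun x _ => Real.abs_sinc_le_one x)
    rw [sub_zero, abs_of_nonneg hT] at this
    have hh : |SInt T| ≤ 1 * T := this
    linarith
  · have := SInt_bound_pos (by linarith : 0 < T)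
    have h2 : 2 / T ≤ 2 := div_le_self (by norm_num) h
    have := Real.pi_lt_four
    have := Real.pi_pos
    rw [abs_le] at *
    constructor <;> linarith

lemma SInt_bdd (T : ℝ) : |SInt T| ≤ 6 := by
  rcases le_total 0 T with h | h
  · exact SInt_bdd_nonneg h
  · have := SInt_bdd_nonneg (neg_nonneg.2 h)
    rwa [SInt_neg, abs_neg] at this

lemma SInt_mul_tendsto (c : ℝ) :
    Tendsto (fun T => SInt (c * T)) atTop (nhds (Real.pi / 2 * Real.sign c)) := by
  rcases lt_trichotomy c 0 with h | h | h
  · rw [Real.sign_of_neg h]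
    have := (SInt_tendsto.comp (tendsto_id.const_mul_atTop (neg_pos.2 h))).neg
    simpa [Function.comp_def, SInt_neg] using this
  · simp [h, SInt_zero]
  · rw [Real.sign_of_pos h]
    simpa [Function.comp_def] using SInt_tendsto.comp (tendsto_id.const_mul_atTop h)

lemma SInt_scale (c T : ℝ) : ∫ x in (0:ℝ)..T, c * Real.sinc (c * x) = SInt (c * T) := by
  rw [intervalIntegral.integral_const_mul]
  have := intervalIntegral.mul_integral_comp_mul_left (f := Real.sinc) (a := 0) (b := T) c
  rw [this, mul_zero]; rfl

def invKer (a b : ℝ) (x l : ℝ) : ℂ :=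
  ((Complex.exp (-Complex.I * (x : ℂ) * (a : ℂ)) -
              Complex.exp (-Complex.I * (x : ℂ) * (b : ℂ))) / (Complex.I * (x : ℂ))) *
     Complex.exp (Complex.I * (l : ℂ) * (x : ℂ))

lemma invKer_meas (a b : ℝ) : Measurable (Function.uncurry (invKer a b)) := by
  unfold invKer Function.uncurry
  fun_prop

lemma invKer_bound (a b x l : ℝ) : ‖invKer a b x l‖ ≤ |b - a| := by
  unfold invKer
  have e1 : Complex.exp (Complex.I * (l : ℂ) * (x : ℂ)) = Complex.exp (((l * x : ℝ) : ℂ) * I) := by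
    congr 1; push_cast; ring
  have e2 : Complex.exp (-Complex.I * (x : ℂ) * (a : ℂ)) -
      Complex.exp (-Complex.I * (x : ℂ) * (b : ℂ)) =
      Complex.exp (((-(x * b) : ℝ) : ℂ) * I) * (Complex.exp (I * ((x * (b - a) : ℝ) : ℂ)) - 1) := by
    rw [mul_sub, ← Complex.exp_add, mul_one]
    congr 2 <;> push_cast <;> ring
  rw [norm_mul, e1, Complex.norm_exp_ofReal_mul_I, mul_one, norm_div, e2, norm_mul,
    Complex.norm_exp_ofReal_mul_I, one_mul, norm_mul, Complex.norm_I, one_mul, Complex.norm_real]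
  refine div_le_of_le_mul₀ (norm_nonneg _) (abs_nonneg _) ?_
  refine Real.norm_exp_I_mul_ofReal_sub_one_le.trans ?_
  rw [norm_mul, mul_comm]; rfl

lemma invKer_symm (a b l x : ℝ) (hx : x ≠ 0) : invKer a b x l + invKer a b (-x) l =
    ((2 * ((l - a) * Real.sinc ((l - a) * x)) - 2 * ((l - b) * Real.sinc ((l - b) * x)) : ℝ) : ℂ) := by
  have hs : ∀ c : ℝ, c * Real.sinc (c * x) = Real.sin (c * x) / x := by
    intro c
    by_cases hc : c = 0
    · simp [hc]
    · rw [Real.sinc_of_ne_zero (mul_ne_zero hc hx)]; field_simp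
  have hxC : (x : ℂ) ≠ 0 := by exact_mod_cast hx
  rw [hs, hs]
  have key : ∀ c : ℝ, ((2 * (Real.sin (c * x) / x) : ℝ) : ℂ) =
      (Complex.exp (I * c * x) - Complex.exp (-I * c * x)) / (I * x) := by
    intro c
    push_cast
    rw [Complex.sin, show ((c : ℂ) * x * I) = I * c * x by ring,
      show (-((c : ℂ) * x) * I) = -I * c * x by ring]
    field_simp
    rw [Complex.I_sq]; ring
  rw [Complex.ofReal_sub, key, key]
  unfold invKer
  push_cast
  simp only [div_mul_eq_mul_div, sub_mul, ← Complex.exp_add]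
  rw [mul_neg I (x:ℂ), div_neg, ← sub_eq_add_neg, ← sub_div, ← sub_div]
  congr 1
  have r : ∀ u v w z u2 v2 w2 z2 : ℂ, u = u2 → v = v2 → w = w2 → z = z2 →
    Complex.exp u - Complex.exp v - (Complex.exp w - Complex.exp z) =
    Complex.exp u2 - Complex.exp w2 - (Complex.exp v2 - Complex.exp z2) := by
    rintro u v w z _ _ _ _ rfl rfl rfl rfl; ring
  apply r <;> ring

lemma invKer_intervalIntegrable (a b l s t : ℝ) :
    IntervalIntegrable (fun x => invKer a b x l) volume s t := by
  refine (intervalIntegrable_const (c := |b - a|)).mono_fun ?_ ?_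
  · exact ((invKer_meas a b).comp (measurable_id.prodMk measurable_const)).aestronglyMeasurable
  · exact Eventually.of_forall fun x => (invKer_bound a b x l).trans (le_abs_self _)

lemma invKer_integral (a b l T : ℝ) : ∫ x in (-T)..T, invKer a b x l =
    ((2 * SInt ((l - a) * T) - 2 * SInt ((l - b) * T) : ℝ) : ℂ) := by
  rw [← intervalIntegral.integral_add_adjacent_intervals (invKer_intervalIntegrable a b l (-T) 0)
    (invKer_intervalIntegrable a b l 0 T)]
  have h := intervalIntegral.integral_comp_neg (a := 0) (b := T) (fun x => invKer a b x l)
  rw [neg_zero] at h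
  have hi : IntervalIntegrable (fun x => invKer a b (-x) l) volume 0 T := by
    have h0 : IntervalIntegrable (fun x => invKer a b x l) volume 0 (-T) :=
      invKer_intervalIntegrable a b l 0 (-T)
    have := (IntervalIntegrable.comp_sub_left h0 0)
    simpa using this
  rw [← h, add_comm, ← intervalIntegral.integral_add (invKer_intervalIntegrable a b l 0 T) hi]
  have hc : ∀ c : ℝ, IntervalIntegrable (fun x => 2 * (c * Real.sinc (c * x))) volume 0 T :=
    fun c => Continuous.intervalIntegrable (by fun_prop) _ _
  have : ∫ x in (0:ℝ)..T, (invKer a b x l + invKer a b (-x) l) = ∫ x in (0:ℝ)..T,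
      ((2 * ((l - a) * Real.sinc ((l - a) * x)) - 2 * ((l - b) * Real.sinc ((l - b) * x)) : ℝ) : ℂ) := by
    refine intervalIntegral.integral_congr_ae ?_
    filter_upwards [Measure.ae_ne volume (0:ℝ)] with x hx _ using invKer_symm a b l x hx
  rw [this, intervalIntegral.integral_ofReal, intervalIntegral.integral_sub (hc _) (hc _),
    intervalIntegral.integral_const_mul (2 : ℝ) (fun x => (l - a) * Real.sinc ((l - a) * x)),
    intervalIntegral.integral_const_mul (2 : ℝ) (fun x => (l - b) * Real.sinc ((l - b) * x)),
    SInt_scale, SInt_scale]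

lemma sign_eq (a b l : ℝ) (hab : a < b) : (Real.sign (l - a) - Real.sign (l - b)) / 2 =
    (Set.Ioo a b).indicator 1 l + (({a} : Set ℝ).indicator 1 l + ({b} : Set ℝ).indicator 1 l) / 2 := by
  simp only [Set.indicator_apply, Set.mem_Ioo, Set.mem_singleton_iff, Pi.one_apply, Real.sign]
  split_ifs <;> grind

theorem stmt_10 (μ : Measure ℝ) [IsProbabilityMeasure μ] (F : ℝ → ℂ)
    (hF : ∀ x : ℝ, F x = ∫ l, Complex.exp (Complex.I * (l : ℂ) * (x : ℂ)) ∂μ)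
    (a₀ b₀ : ℝ) (hab : a₀ < b₀) :
    Tendsto
      (fun T : ℝ => (1 / (2 * (Real.pi : ℂ))) *
        ∫ x in (-T)..T,
          ((Complex.exp (-Complex.I * (x : ℂ) * (a₀ : ℂ)) -
              Complex.exp (-Complex.I * (x : ℂ) * (b₀ : ℂ))) / (Complex.I * (x : ℂ))) * F x)
      atTop
      (nhds ((((μ (Set.Ioo a₀ b₀)).toReal +
        ((μ {a₀}).toReal + (μ {b₀}).toReal) / 2 : ℝ) : ℂ))) := by
  have hpi : Real.pi ≠ 0 := Real.pi_ne_zero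
  let G : ℝ → ℝ → ℝ := fun T l =>
    1 / (2 * Real.pi) * (2 * SInt ((l - a₀) * T) - 2 * SInt ((l - b₀) * T))
  have step : ∀ᶠ T : ℝ in atTop, ((∫ l, G T l ∂μ : ℝ) : ℂ) = (1 / (2 * (Real.pi : ℂ))) *
        ∫ x in (-T)..T,
          ((Complex.exp (-Complex.I * (x : ℂ) * (a₀ : ℂ)) -
              Complex.exp (-Complex.I * (x : ℂ) * (b₀ : ℂ))) / (Complex.I * (x : ℂ))) * F x := by
    filter_upwards [eventually_ge_atTop 0] with T hT
    have hint : Integrable (Function.uncurry (invKer a₀ b₀))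
        ((volume.restrict (Set.Ioc (-T) T)).prod μ) :=
      Integrable.of_bound (invKer_meas a₀ b₀).aestronglyMeasurable (|b₀ - a₀|)
        (Eventually.of_forall fun p => invKer_bound a₀ b₀ p.1 p.2)
    have e : ∀ x : ℝ, ((Complex.exp (-Complex.I * (x : ℂ) * (a₀ : ℂ)) -
              Complex.exp (-Complex.I * (x : ℂ) * (b₀ : ℂ))) / (Complex.I * (x : ℂ))) * F x =
        ∫ l, invKer a₀ b₀ x l ∂μ := by
      intro x
      rw [hF, ← integral_const_mul]; rfl
    simp_rw [e]
    rw [intervalIntegral.integral_of_le (by linarith), integral_integral_swap hint]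
    simp_rw [← intervalIntegral.integral_of_le (by linarith : -T ≤ T), invKer_integral]
    rw [integral_const_mul, integral_complex_ofReal]
    push_cast
    rfl
  refine Tendsto.congr' step ?_
  refine (Complex.continuous_ofReal.tendsto _).comp ?_
  have lim : ∫ l, (Real.sign (l - a₀) - Real.sign (l - b₀)) / 2 ∂μ =
      (μ (Set.Ioo a₀ b₀)).toReal + ((μ {a₀}).toReal + (μ {b₀}).toReal) / 2 := by
    simp_rw [sign_eq a₀ b₀ _ hab]
    have hI : ∀ s : Set ℝ, MeasurableSet s → Integrable (s.indicator (1 : ℝ → ℝ)) μ :=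
      fun s hs => (integrable_const (1:ℝ)).indicator hs
    have h1 := hI _ (measurableSet_Ioo (a := a₀) (b := b₀))
    have h2 := hI _ (measurableSet_singleton a₀)
    have h3 := hI _ (measurableSet_singleton b₀)
    have h4 : Integrable (fun l => (({a₀} : Set ℝ).indicator (1 : ℝ → ℝ) l +
        ({b₀} : Set ℝ).indicator (1 : ℝ → ℝ) l) / 2) μ := (h2.add h3).div_const 2
    rw [integral_add h1 h4, integral_div, integral_add h2 h3,
      integral_indicator_one measurableSet_Ioo, integral_indicator_one (measurableSet_singleton _),
      integral_indicator_one (measurableSet_singleton _)]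
    rfl
  rw [← lim]
  refine tendsto_integral_filter_of_dominated_convergence
    (fun _ => 1 / (2 * Real.pi) * 24) ?_ ?_ (integrable_const _) ?_
  · refine Eventually.of_forall fun T => Continuous.aestronglyMeasurable ?_
    have := SInt_continuous
    fun_prop
  · refine Eventually.of_forall fun T => Eventually.of_forall fun l => ?_
    have h1 := SInt_bdd ((l - a₀) * T)
    have h2 := SInt_bdd ((l - b₀) * T)
    have hp : 0 < 1 / (2 * Real.pi) := by positivity
    rw [norm_mul, Real.norm_of_nonneg hp.le]
    refine mul_le_mul_of_nonneg_left ?_ hp.le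
    rw [Real.norm_eq_abs]
    rw [abs_le] at *
    constructor <;> linarith
  · refine Eventually.of_forall fun l => ?_
    have := (((SInt_mul_tendsto (l - a₀)).const_mul 2).sub
      ((SInt_mul_tendsto (l - b₀)).const_mul 2)).const_mul (1 / (2 * Real.pi))
    convert this using 2
    field_simp
end
end

section
/- (Green's function identities) (1) For every smooth compactly supported φ : ℝ → ℂ with support contained in (0, 1/2), the function u(x) = ∫_0^{1/2} φ(y)·(1 − |x − y|) dy is twice differentiable at every x ∈ (0, 1/2), and u''(x) = −2 φ(x) there. (2) For every smooth compactly supported φ : ℝ → ℂ with support contained in (0, 1), the function u(x) = ∫_0^1 e^{−|x−y|} φ(y) dy is twice differentiable at every x ∈ (0, 1), and u(x) − u''(x) = 2 φ(x) there. -/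
open MeasureTheory Complex

noncomputable section

theorem split_aux (b t : ℝ) (ht : t ∈ Set.Ioo (0 : ℝ) b) (p q F : ℝ → ℂ)
    (hp : Continuous p) (hq : Continuous q) (a₁ b₁ a₂ b₂ : ℂ)
    (h₁ : ∀ y, y ≤ t → F y = a₁ * p y + b₁ * q y)
    (h₂ : ∀ y, t ≤ y → F y = a₂ * p y + b₂ * q y) :
    ∫ y in Set.Ioo (0 : ℝ) b, F y =
      (a₁ * (∫ y in (0 : ℝ)..t, p y) + b₁ * (∫ y in (0 : ℝ)..t, q y)) +
      (a₂ * ((∫ y in (0 : ℝ)..b, p y) - ∫ y in (0 : ℝ)..t, p y) +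
        b₂ * ((∫ y in (0 : ℝ)..b, q y) - ∫ y in (0 : ℝ)..t, q y)) := by
  obtain ⟨h0, hb⟩ := ht
  have ip : ∀ u v : ℝ, IntervalIntegrable p volume u v := fun u v => hp.intervalIntegrable u v
  have iq : ∀ u v : ℝ, IntervalIntegrable q volume u v := fun u v => hq.intervalIntegrable u v
  have e₁ : Set.EqOn (fun y => a₁ * p y + b₁ * q y) F (Set.uIcc 0 t) := by
    intro y hy
    rw [Set.uIcc_of_le h0.le] at hy
    exact (h₁ y hy.2).symm
  have e₂ : Set.EqOn (fun y => a₂ * p y + b₂ * q y) F (Set.uIcc t b) := by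
    intro y hy
    rw [Set.uIcc_of_le hb.le] at hy
    exact (h₂ y hy.1).symm
  have c₁ : Continuous (fun y => a₁ * p y + b₁ * q y) := by fun_prop
  have c₂ : Continuous (fun y => a₂ * p y + b₂ * q y) := by fun_prop
  have i₁ : IntervalIntegrable F volume 0 t :=
    (c₁.intervalIntegrable 0 t).congr (fun y hy => e₁ (Set.uIoc_subset_uIcc hy))
  have i₂ : IntervalIntegrable F volume t b :=
    (c₂.intervalIntegrable t b).congr (fun y hy => e₂ (Set.uIoc_subset_uIcc hy))
  rw [← integral_Ioc_eq_integral_Ioo, ← intervalIntegral.integral_of_le (h0.trans hb).le,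
    ← intervalIntegral.integral_add_adjacent_intervals i₁ i₂,
    ← intervalIntegral.integral_congr e₁, ← intervalIntegral.integral_congr e₂,
    intervalIntegral.integral_add ((ip _ _).const_mul _) ((iq _ _).const_mul _),
    intervalIntegral.integral_add ((ip _ _).const_mul _) ((iq _ _).const_mul _),
    intervalIntegral.integral_interval_sub_left (ip _ _) (ip _ _),
    intervalIntegral.integral_interval_sub_left (iq _ _) (iq _ _)]
  simp only [intervalIntegral.integral_const_mul]

theorem second_aux (b : ℝ) (u v w : ℝ → ℂ)
    (h₁ : ∀ t ∈ Set.Ioo (0 : ℝ) b, HasDerivAt u (v t) t) (x : ℝ) (hx : x ∈ Set.Ioo (0 : ℝ) b)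
    (h₂ : HasDerivAt v (w x) x) :
    DifferentiableAt ℝ u x ∧ HasDerivAt (deriv u) (w x) x := by
  refine ⟨(h₁ x hx).differentiableAt, h₂.congr_of_eventuallyEq ?_⟩
  filter_upwards [isOpen_Ioo.mem_nhds hx] with t ht
  exact (h₁ t ht).deriv

theorem stmt_11 :
    (∀ φ : ℝ → ℂ, ContDiff ℝ (⊤ : ℕ∞) φ → HasCompactSupport φ →
      tsupport φ ⊆ Set.Ioo (0 : ℝ) (1 / 2) →
      ∀ x ∈ Set.Ioo (0 : ℝ) (1 / 2),
        DifferentiableAt ℝ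
          (fun t : ℝ => ∫ y in Set.Ioo (0 : ℝ) (1 / 2), φ y * ((1 - |t - y| : ℝ) : ℂ)) x ∧
        HasDerivAt
          (deriv fun t : ℝ => ∫ y in Set.Ioo (0 : ℝ) (1 / 2), φ y * ((1 - |t - y| : ℝ) : ℂ))
          (-2 * φ x) x) ∧
    (∀ φ : ℝ → ℂ, ContDiff ℝ (⊤ : ℕ∞) φ → HasCompactSupport φ →
      tsupport φ ⊆ Set.Ioo (0 : ℝ) 1 →
      ∀ x ∈ Set.Ioo (0 : ℝ) 1,
        DifferentiableAt ℝ
          (fun t : ℝ => ∫ y in Set.Ioo (0 : ℝ) 1, ((Real.exp (-|t - y|) : ℝ) : ℂ) * φ y) x ∧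
        HasDerivAt
          (deriv fun t : ℝ => ∫ y in Set.Ioo (0 : ℝ) 1, ((Real.exp (-|t - y|) : ℝ) : ℂ) * φ y)
          ((∫ y in Set.Ioo (0 : ℝ) 1, ((Real.exp (-|x - y|) : ℝ) : ℂ) * φ y) - 2 * φ x) x) := by
  constructor
  · intro φ hφ _ _ x hx
    have hc : Continuous φ := hφ.continuous
    have hq : Continuous (fun y : ℝ => (y : ℂ) * φ y) := by fun_prop
    have hP : ∀ t, HasDerivAt (fun t : ℝ => ∫ y in (0 : ℝ)..t, φ y) (φ t) t :=
      fun t => hc.integral_hasStrictDerivAt 0 t |>.hasDerivAt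
    have hQ : ∀ t : ℝ, HasDerivAt (fun t : ℝ => ∫ y in (0 : ℝ)..t, (y : ℂ) * φ y) ((t : ℂ) * φ t) t :=
      fun t => hq.integral_hasStrictDerivAt 0 t |>.hasDerivAt
    have hid : ∀ t : ℝ, HasDerivAt (fun t : ℝ => (t : ℂ)) 1 t := fun t =>
      (hasDerivAt_id t).ofReal_comp
    refine second_aux (1 / 2) _
      (fun t => (∫ y in (0 : ℝ)..(1 / 2), φ y) - 2 * ∫ y in (0 : ℝ)..t, φ y)
      (fun t => -2 * φ t) ?_ x hx ?_
    · intro t ht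
      have hs : ∀ t ∈ Set.Ioo (0 : ℝ) (1 / 2), _ := fun t ht =>
        split_aux (1 / 2) t ht φ (fun y : ℝ => (y : ℂ) * φ y)
          (fun y => φ y * ((1 - |t - y| : ℝ) : ℂ)) hc hq (1 - t) 1 (1 + t) (-1)
          (fun y hy => by
            rw [abs_of_nonneg (by linarith)]; push_cast; ring)
          (fun y hy => by
            rw [abs_of_nonpos (by linarith)]; push_cast; ring)
      have hd := (((hid t).const_sub 1).mul (hP t)).add ((hQ t).const_mul 1) |>.add
        ((((hid t).const_add 1).mul ((hP t).const_sub (∫ y in (0 : ℝ)..(1 / 2), φ y))).add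
          (((hQ t).const_sub (∫ y in (0 : ℝ)..(1 / 2), (y : ℂ) * φ y)).const_mul (-1)))
      refine HasDerivAt.congr_of_eventuallyEq (hd.congr_deriv ?_) ?_
      · ring
      · filter_upwards [isOpen_Ioo.mem_nhds ht] with s hs'
        exact hs s hs'
    · exact (((hP x).const_mul 2).const_sub _).congr_deriv (by ring)
  · intro φ hφ _ _ x hx
    have hc : Continuous φ := hφ.continuous
    have hp : Continuous (fun y : ℝ => ((Real.exp y : ℝ) : ℂ) * φ y) := by fun_prop
    have hq : Continuous (fun y : ℝ => ((Real.exp (-y) : ℝ) : ℂ) * φ y) := by fun_prop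
    have hP : ∀ t, HasDerivAt (fun t : ℝ => ∫ y in (0 : ℝ)..t, ((Real.exp y : ℝ) : ℂ) * φ y)
        (((Real.exp t : ℝ) : ℂ) * φ t) t :=
      fun t => hp.integral_hasStrictDerivAt 0 t |>.hasDerivAt
    have hQ : ∀ t : ℝ, HasDerivAt (fun t : ℝ => ∫ y in (0 : ℝ)..t, ((Real.exp (-y) : ℝ) : ℂ) * φ y)
        (((Real.exp (-t) : ℝ) : ℂ) * φ t) t :=
      fun t => hq.integral_hasStrictDerivAt 0 t |>.hasDerivAt
    have hE : ∀ t : ℝ, HasDerivAt (fun t : ℝ => ((Real.exp t : ℝ) : ℂ)) ((Real.exp t : ℝ) : ℂ) t :=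
      fun t => (Real.hasDerivAt_exp t).ofReal_comp
    have hN : ∀ t : ℝ, HasDerivAt (fun t : ℝ => ((Real.exp (-t) : ℝ) : ℂ))
        (-((Real.exp (-t) : ℝ) : ℂ)) t := fun t =>
      ((hasDerivAt_neg t).exp.ofReal_comp).congr_deriv (by push_cast; ring)
    have hm : ∀ t : ℝ, ((Real.exp t : ℝ) : ℂ) * ((Real.exp (-t) : ℝ) : ℂ) = 1 := fun t => by
      rw [← Complex.ofReal_mul, ← Real.exp_add]; simp
    have hs : ∀ t ∈ Set.Ioo (0 : ℝ) 1, _ := fun t ht =>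
      split_aux 1 t ht _ _
        (fun y => ((Real.exp (-|t - y|) : ℝ) : ℂ) * φ y) hp hq
        ((Real.exp (-t) : ℝ) : ℂ) 0 0 ((Real.exp t : ℝ) : ℂ)
        (fun y hy => by
          rw [abs_of_nonneg (by linarith), neg_sub, sub_eq_add_neg, Real.exp_add]
          push_cast; ring)
        (fun y hy => by
          rw [abs_of_nonpos (by linarith), neg_neg, sub_eq_add_neg, Real.exp_add]
          push_cast; ring)
    refine second_aux 1 _
      (fun t => ((Real.exp t : ℝ) : ℂ) * ((∫ y in (0 : ℝ)..1, ((Real.exp (-y) : ℝ) : ℂ) * φ y) -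
          ∫ y in (0 : ℝ)..t, ((Real.exp (-y) : ℝ) : ℂ) * φ y) -
        ((Real.exp (-t) : ℝ) : ℂ) * ∫ y in (0 : ℝ)..t, ((Real.exp y : ℝ) : ℂ) * φ y)
      (fun x => (∫ y in Set.Ioo (0 : ℝ) 1, ((Real.exp (-|x - y|) : ℝ) : ℂ) * φ y) - 2 * φ x)
      ?_ x hx ?_
    · intro t ht
      have hd := ((hN t).mul (hP t)).add ((hE t).mul ((hQ t).const_sub
        (∫ y in (0 : ℝ)..1, ((Real.exp (-y) : ℝ) : ℂ) * φ y)))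
      refine HasDerivAt.congr_of_eventuallyEq (hd.congr_deriv ?_) ?_
      · ring
      · filter_upwards [isOpen_Ioo.mem_nhds ht] with s hs'
        refine (hs s hs').trans ?_
        simp
    · have hd := ((hE x).mul ((hQ x).const_sub
        (∫ y in (0 : ℝ)..1, ((Real.exp (-y) : ℝ) : ℂ) * φ y))).sub ((hN x).mul (hP x))
      refine hd.congr_deriv ?_
      rw [hs x hx]
      linear_combination (-2 * φ x) * hm x
end
end

section
/- For all x, y ∈ (0, 1/2), the series ∑_{n=1}^∞ (4 / ((2n−1)π)²) · sin((2n−1)π x) · sin((2n−1)π y) converges with sum min(x, y); consequently, for all x, y ∈ (0, 1/2), 1 − |x − y| = 1 − x − y + 2 ∑_{n=1}^∞ (4 / ((2n−1)π)²) · sin((2n−1)π x) · sin((2n−1)π y). -/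
noncomputable section

theorem aux_all {z : ℝ} (hz : z ∈ Set.Icc (0 : ℝ) 1) :
    HasSum (fun n : ℕ => 1 / (n : ℝ) ^ 2 * Real.cos (2 * Real.pi * n * z))
      (Real.pi ^ 2 * (z ^ 2 - z + 1 / 6)) := by
  have h := hasSum_one_div_nat_pow_mul_cos one_ne_zero hz
  have e : (Polynomial.map (algebraMap ℚ ℝ) (Polynomial.bernoulli 2)).eval z
      = z ^ 2 - z + 1 / 6 := by
    simp [Polynomial.bernoulli, Finset.sum_range_succ, Polynomial.eval_add, bernoulli_two,
      bernoulli_one, bernoulli_zero, Nat.choose]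
    ring
  simp only [mul_one] at h
  rw [e] at h
  convert! h using 1
  rw [show ((Nat.factorial 2 : ℕ) : ℝ) = 2 by norm_num [Nat.factorial]]
  ring

theorem aux_odd {t : ℝ} (ht : t ∈ Set.Icc (0 : ℝ) 1) :
    HasSum (fun n : ℕ => 1 / (2 * (n : ℝ) + 1) ^ 2 * Real.cos ((2 * (n : ℝ) + 1) * Real.pi * t))
      (Real.pi ^ 2 * (1 / 8 - t / 4)) := by
  have hA := aux_all (z := t / 2) ⟨by linarith [ht.1], by linarith [ht.2]⟩
  have hE := (aux_all ht).mul_left (1 / 4)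
  set f : ℕ → ℝ := fun n : ℕ => 1 / (n : ℝ) ^ 2 * Real.cos (2 * Real.pi * n * (t / 2)) with hf
  have hE' : HasSum (fun k => f (2 * k)) (1 / 4 * (Real.pi ^ 2 * (t ^ 2 - t + 1 / 6))) := by
    convert! hE using 1
    funext k
    simp only [hf]
    push_cast
    rw [show 2 * Real.pi * (2 * (k : ℝ)) * (t / 2) = 2 * Real.pi * k * t by ring, mul_pow,
      one_div_mul_eq_div]
    ring
  have hO : Summable (fun k => f (2 * k + 1)) :=
    hA.summable.comp_injective (i := fun k => 2 * k + 1) (fun a b h => by simpa using h)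
  have hs := (hE'.even_add_odd hO.hasSum).unique hA
  have h := hO.hasSum
  convert! h using 1
  · funext k
    simp only [hf]
    push_cast
    congr 2
    ring
  · linarith

theorem stmt_13 (x y : ℝ) (hx : x ∈ Set.Ioo (0 : ℝ) (1 / 2))
    (hy : y ∈ Set.Ioo (0 : ℝ) (1 / 2)) :
    HasSum
      (fun n : ℕ =>
        4 / ((2 * (n : ℝ) + 1) * Real.pi) ^ 2 *
          Real.sin ((2 * (n : ℝ) + 1) * Real.pi * x) *
          Real.sin ((2 * (n : ℝ) + 1) * Real.pi * y))
      (min x y) ∧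
    1 - |x - y| =
      1 - x - y + 2 * ∑' n : ℕ,
        4 / ((2 * (n : ℝ) + 1) * Real.pi) ^ 2 *
          Real.sin ((2 * (n : ℝ) + 1) * Real.pi * x) *
          Real.sin ((2 * (n : ℝ) + 1) * Real.pi * y) := by
  obtain ⟨hx0, hx1⟩ := hx
  obtain ⟨hy0, hy1⟩ := hy
  have hm : min x y = (x + y - |x - y|) / 2 := by
    rcases le_total x y with h | h
    · rw [min_eq_left h, abs_of_nonpos (by linarith)]; ring
    · rw [min_eq_right h, abs_of_nonneg (by linarith)]; ring
  have hpi := Real.pi_ne_zero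
  have key : HasSum
      (fun n : ℕ =>
        4 / ((2 * (n : ℝ) + 1) * Real.pi) ^ 2 *
          Real.sin ((2 * (n : ℝ) + 1) * Real.pi * x) *
          Real.sin ((2 * (n : ℝ) + 1) * Real.pi * y))
      (min x y) := by
    have h1 := aux_odd (t := |x - y|) ⟨abs_nonneg _, abs_le.2 ⟨by linarith, by linarith⟩⟩
    have h2 := aux_odd (t := x + y) ⟨by linarith, by linarith⟩
    have h := (h1.sub h2).mul_left (2 / Real.pi ^ 2)
    convert! h using 1
    · funext n
      have hn : (2 * (n : ℝ) + 1) ≠ 0 := by positivity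
      have hc : Real.cos ((2 * (n : ℝ) + 1) * Real.pi * |x - y|)
          = Real.cos ((2 * (n : ℝ) + 1) * Real.pi * x - (2 * (n : ℝ) + 1) * Real.pi * y) := by
        rcases abs_choice (x - y) with e | e
        · rw [e, mul_sub]
        · rw [e, mul_neg, Real.cos_neg, mul_sub]
      rw [hc, mul_add, Real.cos_sub, Real.cos_add]
      field_simp
      ring
    · rw [hm]
      field_simp
      ring
  refine ⟨key, ?_⟩
  rw [key.tsum_eq, hm]
  ring
end
end

section
/- Let g : ℝ → ℂ be continuous on [0, 1], differentiable at every point of (0, 1), with derivative g' continuous and integrable on (0, 1). For every x ∈ (0, 1), (1/2) · ( ∫_0^1 k_x(y) · g'(y) dy + ∫_0^1 e^{−|x−y|} · g(y) dy ) = g(x) − (e^{−x} g(0) + e^{−(1−x)} g(1))/2, where k_x(y) = e^{y−x} for y < x and k_x(y) = −e^{x−y} for y ≥ x (the y-derivative of y ↦ e^{−|x−y|}). -/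
open MeasureTheory Complex

noncomputable section

theorem piece_aux (g : ℝ → ℂ)
    (hgcont : ContinuousOn g (Set.Icc (0 : ℝ) 1))
    (hgdiff : ∀ x ∈ Set.Ioo (0 : ℝ) 1, DifferentiableAt ℝ g x)
    (hg'int : IntegrableOn (deriv g) (Set.Ioo (0 : ℝ) 1))
    (a b : ℝ) (ha : 0 ≤ a) (hab : a ≤ b) (hb : b ≤ 1) (c c' : ℝ → ℂ)
    (hc : ∀ y, HasDerivAt c (c' y) y) (hc' : Continuous c') :
    ∫ y in Set.Ioo a b, (c y * deriv g y + c' y * g y) = c b * g b - c a * g a := by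
  have hcc : Continuous c := continuous_iff_continuousAt.2 fun y => (hc y).continuousAt
  have hsub : Set.Icc a b ⊆ Set.Icc 0 1 := Set.Icc_subset_Icc ha hb
  have h1 : IntervalIntegrable (deriv g) volume a b := by
    rw [intervalIntegrable_iff_integrableOn_Ioo_of_le hab]
    exact hg'int.mono_set (Set.Ioo_subset_Ioo ha hb)
  have h2 : IntervalIntegrable (fun y => c y * deriv g y) volume a b :=
    h1.continuousOn_mul hcc.continuousOn
  have h3 : IntervalIntegrable (fun y => c' y * g y) volume a b := by
    apply ContinuousOn.intervalIntegrable
    rw [Set.uIcc_of_le hab]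
    exact hc'.continuousOn.mul (hgcont.mono hsub)
  rw [← integral_Ioc_eq_integral_Ioo, ← intervalIntegral.integral_of_le hab]
  refine intervalIntegral.integral_eq_sub_of_hasDerivAt_of_le (f := fun y => c y * g y) hab
    (hcc.continuousOn.mul (hgcont.mono hsub)) (fun y hy => ?_) (h2.add h3)
  have := (hc y).mul (hgdiff y ⟨ha.trans_lt hy.1, hy.2.trans_le hb⟩).hasDerivAt
  exact this.congr_deriv (add_comm _ _)

theorem stmt_14 (g : ℝ → ℂ)
    (hgcont : ContinuousOn g (Set.Icc (0 : ℝ) 1))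
    (hgdiff : ∀ x ∈ Set.Ioo (0 : ℝ) 1, DifferentiableAt ℝ g x)
    (hg'cont : ContinuousOn (deriv g) (Set.Ioo (0 : ℝ) 1))
    (hg'int : IntegrableOn (deriv g) (Set.Ioo (0 : ℝ) 1)) :
    ∀ x ∈ Set.Ioo (0 : ℝ) 1,
      (1 / 2 : ℂ) *
        ((∫ y in Set.Ioo (0 : ℝ) 1,
            (if y < x then ((Real.exp (y - x) : ℝ) : ℂ) else -((Real.exp (x - y) : ℝ) : ℂ)) *
              deriv g y) +
          ∫ y in Set.Ioo (0 : ℝ) 1, ((Real.exp (-|x - y|) : ℝ) : ℂ) * g y) =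
      g x - (((Real.exp (-x) : ℝ) : ℂ) * g 0 + ((Real.exp (-(1 - x)) : ℝ) : ℂ) * g 1) / 2 := by
  intro x hx
  have hx0 := hx.1
  have hx1 := hx.2
  have hi1 : IntegrableOn (fun y => (if y < x then ((Real.exp (y - x) : ℝ) : ℂ)
      else -((Real.exp (x - y) : ℝ) : ℂ)) * deriv g y) (Set.Ioo (0 : ℝ) 1) := by
    refine Integrable.bdd_mul (c := 1) hg'int ?_ ?_
    · apply Measurable.aestronglyMeasurable
      apply Measurable.ite measurableSet_Iio <;> fun_prop
    · refine Filter.Eventually.of_forall fun y => ?_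
      split_ifs with h
      · rw [Complex.norm_real, Real.norm_eq_abs, Real.abs_exp, Real.exp_le_one_iff]
        linarith
      · rw [norm_neg, Complex.norm_real, Real.norm_eq_abs, Real.abs_exp, Real.exp_le_one_iff]
        linarith
  have hi2 : IntegrableOn (fun y => ((Real.exp (-|x - y|) : ℝ) : ℂ) * g y)
      (Set.Ioo (0 : ℝ) 1) := by
    refine IntegrableOn.mono_set (ContinuousOn.integrableOn_Icc ?_) Set.Ioo_subset_Icc_self
    refine ContinuousOn.mul (Continuous.continuousOn ?_) hgcont
    fun_prop
  rw [← integral_add hi1 hi2]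
  have hi : IntegrableOn (fun y => (if y < x then ((Real.exp (y - x) : ℝ) : ℂ)
      else -((Real.exp (x - y) : ℝ) : ℂ)) * deriv g y + ((Real.exp (-|x - y|) : ℝ) : ℂ) * g y)
      (Set.Ioo (0 : ℝ) 1) := hi1.add hi2
  have hU : Set.Ioo (0 : ℝ) 1 = Set.Ioo 0 x ∪ Set.Ico x 1 :=
    (Set.Ioo_union_Ico_eq_Ioo hx0 hx1.le).symm
  have hd : Disjoint (Set.Ioo 0 x) (Set.Ico x 1) := by
    rw [Set.disjoint_left]
    intro y hy hy2
    exact absurd hy.2 (not_lt.2 hy2.1)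
  rw [hU] at hi ⊢
  rw [setIntegral_union hd measurableSet_Ico (hi.mono_set Set.subset_union_left)
    (hi.mono_set Set.subset_union_right), integral_Ico_eq_integral_Ioo]
  have e1 := piece_aux g hgcont hgdiff hg'int 0 x le_rfl hx0.le hx1.le
    (fun y => ((Real.exp (y - x) : ℝ) : ℂ)) (fun y => ((Real.exp (y - x) : ℝ) : ℂ))
    (fun y => by
      have := ((hasDerivAt_id y).sub_const x).exp.ofReal_comp
      simpa using this) (by fun_prop)
  have e2 := piece_aux g hgcont hgdiff hg'int x 1 hx0.le hx1.le le_rfl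
    (fun y => -((Real.exp (x - y) : ℝ) : ℂ)) (fun y => ((Real.exp (x - y) : ℝ) : ℂ))
    (fun y => by
      have := ((hasDerivAt_id y).const_sub x).exp.ofReal_comp.fun_neg
      simpa using this) (by fun_prop)
  have c1 : ∀ y ∈ Set.Ioo 0 x, (if y < x then ((Real.exp (y - x) : ℝ) : ℂ)
      else -((Real.exp (x - y) : ℝ) : ℂ)) * deriv g y + ((Real.exp (-|x - y|) : ℝ) : ℂ) * g y =
      ((Real.exp (y - x) : ℝ) : ℂ) * deriv g y + ((Real.exp (y - x) : ℝ) : ℂ) * g y := by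
    intro y hy
    rw [if_pos hy.2, abs_of_pos (sub_pos.2 hy.2), neg_sub]
  have c2 : ∀ y ∈ Set.Ioo x 1, (if y < x then ((Real.exp (y - x) : ℝ) : ℂ)
      else -((Real.exp (x - y) : ℝ) : ℂ)) * deriv g y + ((Real.exp (-|x - y|) : ℝ) : ℂ) * g y =
      -((Real.exp (x - y) : ℝ) : ℂ) * deriv g y + ((Real.exp (x - y) : ℝ) : ℂ) * g y := by
    intro y hy
    rw [if_neg (not_lt.2 hy.1.le), abs_of_neg (sub_neg.2 hy.1), neg_neg]
  rw [setIntegral_congr_fun measurableSet_Ioo c1, setIntegral_congr_fun measurableSet_Ioo c2,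
    e1, e2]
  simp only [sub_self, Real.exp_zero, zero_sub, neg_sub, Complex.ofReal_one]
  ring
end
end

section
/- Let F : ℝ → ℂ be continuous and positive definite on ℝ, and suppose the imaginary part of F is not identically zero. For m ∈ ℝ define F_m(x) = Re(F(x)) + i·m·Im(F(x)). Then: (i) for every m ∈ ℝ with −1 ≤ m ≤ 1, F_m is positive definite on ℝ; and (ii) there exists M > 0 such that for every real m with |m| > M, F_m is not positive definite on ℝ. -/
open Complex

noncomputable section

theorem PosDefOnReal.abs_im_le {G : ℝ → ℂ} (h : PosDefOnReal G) (x : ℝ) :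
    |(G x).im| ≤ (G 0).re := by
  have h0 := (h 1 ![0] ![1]).1
  have h1 := (h 2 ![0, x] ![1, 1]).1
  have h2 := (h 2 ![0, x] ![1, Complex.I]).2
  have h3 := (h 2 ![0, x] ![1, -Complex.I]).2
  simp [Fin.sum_univ_two] at h0 h1 h2 h3
  rw [abs_le]
  constructor <;> linarith

theorem PosDefOnReal.conj {F : ℝ → ℂ} (h : PosDefOnReal F) :
    PosDefOnReal (fun x => (starRingEnd ℂ) (F x)) := by
  intro N x c
  have key : (∑ i, ∑ j, (starRingEnd ℂ) (c i) * c j * (starRingEnd ℂ) (F (x i - x j))) =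
      (starRingEnd ℂ) (∑ i, ∑ j, (starRingEnd ℂ) ((starRingEnd ℂ) (c i)) *
        (starRingEnd ℂ) (c j) * F (x i - x j)) := by
    simp [map_sum]
  have := h N x (fun i => (starRingEnd ℂ) (c i))
  simp only [key, Complex.conj_re, Complex.conj_im]
  exact ⟨by rw [this.1, neg_zero], this.2⟩

theorem PosDefOnReal.comb {F G : ℝ → ℂ} (hF : PosDefOnReal F) (hG : PosDefOnReal G)
    {a b : ℝ} (ha : 0 ≤ a) (hb : 0 ≤ b) :
    PosDefOnReal (fun x => (a : ℂ) * F x + (b : ℂ) * G x) := by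
  intro N x c
  have key : (∑ i, ∑ j, (starRingEnd ℂ) (c i) * c j *
        ((a : ℂ) * F (x i - x j) + (b : ℂ) * G (x i - x j))) =
      (a : ℂ) * (∑ i, ∑ j, (starRingEnd ℂ) (c i) * c j * F (x i - x j)) +
      (b : ℂ) * (∑ i, ∑ j, (starRingEnd ℂ) (c i) * c j * G (x i - x j)) := by
    simp only [Finset.mul_sum, ← Finset.sum_add_distrib]
    refine Finset.sum_congr rfl fun i _ => Finset.sum_congr rfl fun j _ => ?_
    ring
  obtain ⟨h1, h2⟩ := hF N x c
  obtain ⟨h3, h4⟩ := hG N x c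
  simp only [key, Complex.add_re, Complex.add_im, Complex.re_ofReal_mul, Complex.im_ofReal_mul]
  rw [h1, h3]
  exact ⟨by simp, by positivity⟩

theorem stmt_19 (F : ℝ → ℂ) (hcont : Continuous F) (hpd : PosDefOnReal F)
    (him : ∃ x : ℝ, (F x).im ≠ 0) :
    (∀ m : ℝ, -1 ≤ m → m ≤ 1 →
      PosDefOnReal (fun x => ((F x).re : ℂ) + Complex.I * (m : ℂ) * ((F x).im : ℂ))) ∧
    (∃ M : ℝ, 0 < M ∧ ∀ m : ℝ, M < |m| →
      ¬ PosDefOnReal (fun x => ((F x).re : ℂ) + Complex.I * (m : ℂ) * ((F x).im : ℂ))) := by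
  constructor
  · intro m h1 h2
    have h := hpd.comb hpd.conj (a := (1 + m) / 2) (b := (1 - m) / 2) (by linarith) (by linarith)
    convert h using 2 with x
    apply Complex.ext <;> simp <;> ring
  · obtain ⟨x, hx⟩ := him
    have hx' : 0 < |(F x).im| := abs_pos.mpr hx
    refine ⟨|(F 0).re| / |(F x).im| + 1, by positivity, fun m hm h => ?_⟩
    have hb := h.abs_im_le x
    simp [abs_mul] at hb
    have h4 : |(F 0).re| / |(F x).im| < |m| := by linarith
    rw [div_lt_iff₀ hx'] at h4
    linarith [le_abs_self (F 0).re]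
end
end
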